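/- arXiv:2504.17446 — 11 statements merged into one kernel-verified Lean document; each statement's English description precedes it below -/
import Mathlib

section
/- Any two elements of order 2 in the alternating group A_6 are conjugate in A_6. -/
/-!
A permutation of order 2 is a product of disjoint transpositions; on six points there are at most
three of them, and evenness forces exactly two (`cycleType_of_orderOf_eq_two`). Hence any two
involutions of `A₆` are conjugate in `S₆`. Each fixes two points, and the transposition of those
points is an odd permutation commuting with the involution, so the conjugating element can be taken
even; this last step is `alternatingGroup.isConj_of`.
-/

theorem cycleType_of_orderOf_eq_two (a : alternatingGroup (Fin 6)) (ha : orderOf a = 2) :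
    (a : Equiv.Perm (Fin 6)).cycleType = Multiset.replicate 2 2 := by
  have hord : orderOf (a : Equiv.Perm (Fin 6)) = 2 := by rw [Subgroup.orderOf_coe, ha]
  obtain ⟨n, hn⟩ := Equiv.Perm.cycleType_prime_order (hord ▸ Nat.prime_two)
  rw [hord] at hn
  have hcard : (n + 1) * 2 ≤ 6 := by
    have h := (Equiv.Perm.sum_cycleType (a : Equiv.Perm (Fin 6))).trans_le (Finset.card_le_univ _)
    rwa [hn, Multiset.sum_replicate, smul_eq_mul, Fintype.card_fin] at h
  have hsign := Equiv.Perm.mem_alternatingGroup.1 a.2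
  rw [Equiv.Perm.sign_of_cycleType, hn] at hsign
  have hle : n ≤ 2 := by omega
  interval_cases n
  · exact absurd hsign (by decide)
  · exact hn
  · exact absurd hsign (by decide)

/-- Any two elements of order 2 in the alternating group `A₆` are conjugate in `A₆`. -/
theorem a6_involutions_conjugate
    (a b : alternatingGroup (Fin 6))
    (ha : orderOf a = 2) (hb : orderOf b = 2) :
    IsConj a b := by
  have hca := cycleType_of_orderOf_eq_two a ha
  have hcb := cycleType_of_orderOf_eq_two b hb
  refine alternatingGroup.isConj_of (Equiv.Perm.isConj_iff_cycleType_eq.2 (hca.trans hcb.symm)) ?_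
  rw [← Equiv.Perm.sum_cycleType, hca]
  simp
end

section
/- Every element f of order 5 in the alternating group A_6 is conjugate in A_6 to its inverse f⁻¹, but f is not conjugate in A_6 to its square f². -/
/-!
Let `c = (0 1 2 3 4)`. An element of order `5` in `S₆` is a single `5`-cycle, because `6 < 2 * 5`,
so it has the form `g * c * g⁻¹` with `g` in `S₆`. Since `A₆` is normal in `S₆`, conjugating by `g`
reduces both claims to `c` (`exists_conj_five_cycle`).

On the points `0, …, 4`, read as `ℤ/5`, the cycle `c` is translation by `1`. Negation conjugates `c`
to its inverse and is the even permutation `(1 4)(2 3)`. Every `b` with `b * c = c ^ 2 * b` fixes `5`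
and acts on `ℤ/5` as `x ↦ 2 * x + k`, a `4`-cycle, so it is odd (`sign_of_conj_sq`).
-/

open Equiv Equiv.Perm

/-- The `5`-cycle `(0 1 2 3 4)` in `S₆`. -/
def fiveCycle : Perm (Fin 6) := swap 0 1 * swap 1 2 * swap 2 3 * swap 3 4

/-- The elements of order `5` in `S₆` form one conjugacy class. -/
theorem exists_conj_five_cycle (f : Perm (Fin 6)) (hf : orderOf f = 5) :
    ∃ g : Perm (Fin 6), g * fiveCycle * g⁻¹ = f := by
  have hc : orderOf fiveCycle = 5 := by
    have : Fact (Nat.Prime 5) := ⟨by norm_num⟩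
    exact orderOf_eq_prime (by decide) (by decide)
  have isCycle : ∀ σ : Perm (Fin 6), orderOf σ = 5 → σ.IsCycle := fun σ hσ =>
    isCycle_of_prime_order' (by rw [hσ]; norm_num) (by rw [hσ]; simp)
  rw [← isConj_iff, (isCycle _ hc).isConj_iff (isCycle _ hf), ← (isCycle _ hc).orderOf,
    ← (isCycle _ hf).orderOf, hc, hf]

/-- The permutation `x ↦ 2 * x` of the points `0, …, 4` read as `ℤ/5`, that is `(1 2 4 3)`. -/
def doubling : Perm (Fin 6) := swap 1 2 * swap 2 4 * swap 4 3

/-- The permutations conjugating `fiveCycle` to its square are odd: such a permutation is determined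
by its value at `0`, hence has the form `fiveCycle ^ k * doubling`. -/
theorem sign_of_conj_sq (b : Perm (Fin 6)) (hb : b * fiveCycle = fiveCycle ^ 2 * b) :
    sign b = -1 := by
  have step : ∀ x y, fiveCycle x = y → b y = (fiveCycle ^ 2) (b x) := fun x y hxy => by
    rw [← hxy, ← Perm.mul_apply, hb, Perm.mul_apply]
  have h5 : b 5 = 5 := by
    have fixed : ∀ x, x = (fiveCycle ^ 2) x → x = 5 := by decide
    exact fixed _ (step 5 5 (by decide))
  have h0 : b 0 ≠ 5 := fun h => absurd (b.injective (h.trans h5.symm)) (by decide)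
  obtain ⟨k, hk⟩ : ∃ k : Fin 5, b 0 = (fiveCycle ^ (k : ℕ)) 0 := by
    have orbit : ∀ x : Fin 6, x ≠ 5 → ∃ k : Fin 5, x = (fiveCycle ^ (k : ℕ)) 0 := by decide
    exact orbit _ h0
  have h1 := step 0 1 (by decide)
  have h2 := step 1 2 (by decide)
  have h3 := step 2 3 (by decide)
  have h4 := step 3 4 (by decide)
  rw [hk] at h1
  rw [h1] at h2
  rw [h2] at h3
  rw [h3] at h4
  have hbk : b = fiveCycle ^ (k : ℕ) * doubling := by
    ext x : 1
    fin_cases x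
    · refine hk.trans ?_
      clear * -
      revert k; decide
    · refine h1.trans ?_
      clear * -
      revert k; decide
    · refine h2.trans ?_
      clear * -
      revert k; decide
    · refine h3.trans ?_
      clear * -
      revert k; decide
    · refine h4.trans ?_
      clear * -
      revert k; decide
    · refine h5.trans ?_
      clear * -
      revert k; decide
  have hc : sign fiveCycle = 1 := by decide
  have hd : sign doubling = -1 := by decide
  rw [hbk, Perm.sign_mul, map_pow, hc, hd, one_pow, one_mul]

/-- Every element `f` of order 5 in `A₆` is conjugate in `A₆` to its inverse,
but not conjugate to its square. -/
theorem a6_order_five_conj_inverse_not_square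
    (f : alternatingGroup (Fin 6)) (hf : orderOf f = 5) :
    IsConj f f⁻¹ ∧ ¬ IsConj f (f ^ 2) := by
  obtain ⟨g, hg⟩ := exists_conj_five_cycle (f : Perm (Fin 6)) (by simpa using hf)
  constructor
  · have hneg : (swap 1 4 * swap 2 3) * fiveCycle * (swap 1 4 * swap 2 3)⁻¹ = fiveCycle⁻¹ := by
      decide
    have hsign : sign (swap 1 4 * swap 2 3 : Perm (Fin 6)) = 1 := by decide
    generalize (swap 1 4 * swap 2 3 : Perm (Fin 6)) = h at hneg hsign
    refine isConj_iff.2 ⟨⟨g * h * g⁻¹, ?_⟩, Subtype.ext ?_⟩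
    · rw [mem_alternatingGroup, Perm.sign_mul, Perm.sign_mul, hsign, sign_inv, mul_one, Int.units_mul_self]
    · change g * h * g⁻¹ * (f : Perm (Fin 6)) * (g * h * g⁻¹)⁻¹ = (f : Perm (Fin 6))⁻¹
      calc g * h * g⁻¹ * (f : Perm (Fin 6)) * (g * h * g⁻¹)⁻¹
          = g * (h * fiveCycle * h⁻¹) * g⁻¹ := by rw [← hg]; group
        _ = (f : Perm (Fin 6))⁻¹ := by rw [hneg, ← hg]; group
  · intro hconj
    obtain ⟨a, ha⟩ := isConj_iff.1 hconj
    have ha' : (a : Perm (Fin 6)) * f * (a : Perm (Fin 6))⁻¹ = (f : Perm (Fin 6)) ^ 2 :=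
      congrArg Subtype.val ha
    have hodd : sign (g⁻¹ * (a : Perm (Fin 6)) * g) = -1 := by
      apply sign_of_conj_sq
      calc g⁻¹ * (a : Perm (Fin 6)) * g * fiveCycle
          = g⁻¹ * ((a : Perm (Fin 6)) * f * (a : Perm (Fin 6))⁻¹) * a * g := by rw [← hg]; group
        _ = fiveCycle ^ 2 * (g⁻¹ * (a : Perm (Fin 6)) * g) := by
          rw [ha', ← hg, conj_pow]; group
    rw [Perm.sign_mul, Perm.sign_mul, mem_alternatingGroup.1 a.2, sign_inv, mul_one,
      Int.units_mul_self] at hodd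
    exact absurd hodd (by decide)
end

section
/- Every maximal subgroup M of the alternating group A_6 is isomorphic to the alternating group A_5, or isomorphic to the symmetric group S_4, or has cardinality 36. -/
/-!
The maximal subgroup `M` is classified through its action on the six letters.

If `M` is intransitive it leaves a set of one, two or three letters invariant, and by maximality it
is the full stabilizer of a point (isomorphic to `A₅`), of a pair (isomorphic to `S₄`, acting on the
other four letters, with the sign deciding the action on the pair), or is contained in, hence equal
to, the stabilizer of a partition into two triples, which has order 36. If `M` is transitive but
imprimitive, it is the stabilizer of a partition into two triples or into three pairs; the latter is
the image of `S₄` acting on the two-element subsets of a four-element set.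

If `M` is primitive, it contains no three-cycle by Jordan's theorem. Even involutions fix points, so
point stabilizers have even order; they have order prime to 3 because an element of order three
with a fixed point is a three-cycle; and they are not 2-groups, since a 2-group fixing one of six
points fixes a second one, which primitivity only allows for trivial stabilizers. Together with the
simplicity of `A₆`, which rules out index 3, this forces `M` to have index 6
(`index_eq_six_of_primitive`). The action on the six cosets of `M` is then an automorphism of `A₆`
carrying `M` to a point stabilizer (`equiv_of_index_eq_six`), so `M` is isomorphic to `A₅`.

The finite facts about the 720 permutations of six letters are settled by kernel evaluation.
-/

open Equiv MulAction
open scoped Pointwise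

namespace A6Max

/-- The alternating group on six letters. -/
abbrev A6 : Type := alternatingGroup (Fin 6)

lemma card_A6 : Nat.card A6 = 360 := by
  rw [nat_card_alternatingGroup, Nat.card_fin]; rfl

instance : IsSimpleGroup A6 := alternatingGroup.isSimpleGroup (by simp)

lemma eq_of_le {M H : Subgroup A6} (hM : IsCoatom M) (h : M ≤ H) (hH : H ≠ ⊤) : M = H :=
  ((hM.le_iff.1 h).resolve_left hH).symm

/-! ### Point stabilizers and subgroups of index six -/

lemma stabilizer_equiv (p : Fin 6) :
    Nonempty (stabilizer A6 p ≃* alternatingGroup (Fin 5)) := by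
  have hr : (alternatingGroup.ofSubtype ({p}ᶜ : Finset (Fin 6))).range = stabilizer A6 p := by
    ext k
    rw [alternatingGroup.mem_range_ofSubtype_iff, mem_stabilizer_iff]
    constructor
    · intro h
      by_contra hp
      simpa using h (Perm.mem_support.2 hp)
    · intro h x hx
      rw [Finset.mem_compl, Finset.mem_singleton]
      rintro rfl
      exact Perm.mem_support.1 hx h
  have e : ({p}ᶜ : Finset (Fin 6)) ≃ Fin 5 :=
    Fintype.equivFinOfCardEq (by simp)
  exact ⟨(MulEquiv.subgroupCongr hr.symm).trans
    ((MonoidHom.ofInjective alternatingGroup.ofSubtype_injective).symm.trans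
      (Equiv.altCongrHom e))⟩

lemma toPermHom_injective {M : Subgroup A6} (hM : M ≠ ⊤) :
    Function.Injective (toPermHom A6 (A6 ⧸ M)) := by
  rw [← MonoidHom.ker_eq_bot_iff, ← Subgroup.normalCore_eq_ker]
  refine (IsSimpleGroup.eq_bot_or_eq_top_of_normal _ M.normalCore_normal).resolve_right ?_
  intro h
  exact hM (top_le_iff.1 (h ▸ M.normalCore_le))

/-- `A₆` embeds into the symmetric group on the cosets of a proper subgroup; in particular the
index of such a subgroup is at least six. -/
lemma dvd_factorial_index {M : Subgroup A6} (hM : M ≠ ⊤) : 360 ∣ M.index.factorial := by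
  have := Subgroup.card_dvd_of_injective _ (toPermHom_injective hM)
  rwa [card_A6, Nat.card_perm, ← Subgroup.index_eq_card] at this

/-- The action of `A₆` on the six cosets of `M` is an automorphism of `A₆` carrying `M` to a point
stabilizer. -/
lemma equiv_of_index_eq_six {M : Subgroup A6} (hM : M.index = 6) :
    Nonempty (M ≃* alternatingGroup (Fin 5)) := by
  have hne : M ≠ ⊤ := by rintro rfl; simp at hM
  have e : A6 ⧸ M ≃ Fin 6 := Finite.equivFinOfCardEq (by rw [← Subgroup.index_eq_card, hM])
  let f : A6 →* Perm (Fin 6) := e.permCongrHom.toMonoidHom.comp (toPermHom A6 (A6 ⧸ M))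
  have hf : Function.Injective f := e.permCongrHom.injective.comp (toPermHom_injective hne)
  have hs : ∀ g, f g ∈ alternatingGroup (Fin 6) := by
    intro g
    rw [Perm.mem_alternatingGroup]
    rcases IsSimpleGroup.eq_bot_or_eq_top_of_normal (Perm.sign.comp f).ker inferInstance with h | h
    · have := Subgroup.card_dvd_of_injective _ ((MonoidHom.ker_eq_bot_iff _).1 h)
      rw [card_A6] at this
      have := Nat.le_of_dvd (Nat.card_pos) this
      simp at this
    · have hg : g ∈ (Perm.sign.comp f).ker := h ▸ Subgroup.mem_top g
      exact MonoidHom.mem_ker.1 hg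
  let F : A6 →* A6 := f.codRestrict _ hs
  have hF : Function.Injective F := fun a b h => hf (congrArg Subtype.val h)
  let E : A6 ≃* A6 := MulEquiv.ofBijective F (Finite.injective_iff_bijective.1 hF)
  have hmap : M.map E.toMonoidHom = stabilizer A6 (e (1 : A6)) := by
    ext g
    obtain ⟨g, rfl⟩ := E.surjective g
    have : E g ∈ M.map E.toMonoidHom ↔ g ∈ M :=
      Subgroup.mem_map_iff_mem (f := E.toMonoidHom) E.injective
    rw [this, mem_stabilizer_iff]
    change _ ↔ e (g • e.symm (e ((1 : A6) : A6 ⧸ M))) = _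
    rw [e.symm_apply_apply, e.apply_eq_iff_eq]
    change _ ↔ ((g * 1 : A6) : A6 ⧸ M) = _
    rw [eq_comm, QuotientGroup.eq]
    simp
  obtain ⟨c⟩ := stabilizer_equiv (e ((1 : A6) : A6 ⧸ M))
  exact ⟨(E.subgroupMap M).trans ((MulEquiv.subgroupCongr hmap).trans c)⟩

lemma equiv_of_fixed {M : Subgroup A6} (hM : IsCoatom M) (p : Fin 6) (h : ∀ m ∈ M, m • p = p) :
    Nonempty (M ≃* alternatingGroup (Fin 5)) := by
  have hne : ∀ p : Fin 6, ∃ g : A6, g • p ≠ p := by decide +kernel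
  have : M = stabilizer A6 p := by
    refine eq_of_le hM h ?_
    obtain ⟨g, hg⟩ := hne p
    intro ht
    exact hg (mem_stabilizer_iff.1 (ht ▸ Subgroup.mem_top g))
  exact this ▸ stabilizer_equiv p

/-! ### The two classes of maximal subgroups isomorphic to `S₄` -/

/-- If a conjugate of the maximal subgroup `M` lies in an embedded copy of `S₄`, then `M` is a
conjugate of that copy. -/
lemma equiv_of_hom {M : Subgroup A6} (hM : IsCoatom M) (f : Perm (Fin 4) →* Perm (Fin 6))
    (hf : Function.Injective f) (hs : ∀ σ, Perm.sign (f σ) = 1) (e : Perm (Fin 6))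
    (h : ∀ m ∈ M, ∃ σ, f σ = e⁻¹ * m * e) :
    Nonempty (M ≃* Perm (Fin 4)) := by
  let F : Perm (Fin 4) →* A6 := ((MulAut.conj e).toMonoidHom.comp f).codRestrict _ (by
    intro σ
    simp [Perm.mem_alternatingGroup, hs])
  have hF : Function.Injective F := fun a b hab =>
    hf ((MulAut.conj e).injective (congrArg Subtype.val hab))
  have : M = F.range := by
    refine eq_of_le hM ?_ ?_
    · intro m hm
      obtain ⟨σ, hσ⟩ := h m hm
      refine ⟨σ, Subtype.ext ?_⟩
      change e * f σ * e⁻¹ = m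
      rw [hσ]; group
    · intro ht
      have h1 := Nat.card_congr (MonoidHom.ofInjective hF).toEquiv
      rw [ht, Subgroup.card_top, card_A6, Nat.card_perm, Nat.card_fin] at h1
      revert h1; decide
  exact ⟨(MulEquiv.subgroupCongr this).trans (MonoidHom.ofInjective hF).symm⟩

/-- The embedding `S₄ → A₆` in which `S₄` permutes `0, 1, 2, 3` naturally and acts on `{4, 5}`
through the sign. -/
def signHom : Perm (Fin 4) →* Perm (Fin 6) where
  toFun σ := Perm.extendDomain σ (Fin.castLEquiv (by decide : 4 ≤ 6)) *
    if Perm.sign σ = 1 then 1 else swap 4 5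
  map_one' := by decide +kernel
  map_mul' σ ρ := by
    have hc : ∀ ρ : Perm (Fin 4), swap 4 5 * ρ.extendDomain (Fin.castLEquiv (by decide : 4 ≤ 6)) =
        ρ.extendDomain (Fin.castLEquiv (by decide : 4 ≤ 6)) * swap (4 : Fin 6) 5 := by
      decide +kernel
    have hρ := hc ρ
    rw [← Perm.extendDomain_mul, map_mul]
    generalize σ.extendDomain (Fin.castLEquiv (by decide : 4 ≤ 6)) = A,
      ρ.extendDomain (Fin.castLEquiv (by decide : 4 ≤ 6)) = B at hρ ⊢
    rcases Int.units_eq_one_or (Perm.sign σ) with h | h <;>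
      rcases Int.units_eq_one_or (Perm.sign ρ) with h' | h' <;>
      simp [h, h', mul_assoc, ← hρ]

/-- The smaller element of the `i`-th two-element subset of `Fin 4`, in the enumeration
`01, 23, 02, 13, 03, 12` that puts complementary subsets next to each other. -/
def lo : Fin 6 → Fin 4 := ![0, 2, 0, 1, 0, 1]

/-- The larger element of the `i`-th two-element subset of `Fin 4`, in the same enumeration. -/
def hi : Fin 6 → Fin 4 := ![1, 3, 2, 3, 3, 2]

/-- The position of `{a, b}` in the enumeration given by `lo` and `hi` (junk when `a = b`). -/
def idx (a b : Fin 4) : Fin 6 :=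
  (![![0, 0, 2, 4], ![0, 0, 5, 3], ![2, 5, 0, 1], ![4, 3, 1, 0]] : Fin 4 → Fin 4 → Fin 6) a b

/-- The action of `S₄` on the six two-element subsets of `Fin 4`. -/
def pairHom : Perm (Fin 4) →* Perm (Fin 6) :=
  MonoidHom.toHomPerm
    { toFun := fun σ i => idx (σ (lo i)) (σ (hi i))
      map_one' := by
        have : ∀ i, idx (lo i) (hi i) = i := by decide +kernel
        exact funext this
      map_mul' := by
        have hidx : ∀ σ : Perm (Fin 4), ∀ a b, a ≠ b →
            idx (σ a) (σ b) = idx (σ (lo (idx a b))) (σ (hi (idx a b))) := by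
          decide +kernel
        have hlt : ∀ i, lo i ≠ hi i := by decide
        exact fun σ ρ => funext fun i => hidx σ _ _ (ρ.injective.ne (hlt i)) }

/-- The involution exchanging complementary two-element subsets of `Fin 4`. -/
def tau : Perm (Fin 6) := swap 0 1 * swap 2 3 * swap 4 5

/-- The image of `signHom` contains, hence is, the stabilizer of `{4, 5}` in `A₆`. -/
lemma signHom_surj : ∀ g : Perm (Fin 6), g • ({4, 5} : Finset (Fin 6)) = {4, 5} → Perm.sign g = 1 →
    ∃ σ, signHom σ = g := by decide +kernel

/-- The image of `pairHom` contains, hence is, the centralizer of `tau` in `A₆`, which is the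
stabilizer of the partition `01 | 23 | 45`. -/
lemma pairHom_surj : ∀ g : Perm (Fin 6), g * tau = tau * g → Perm.sign g = 1 →
    ∃ σ, pairHom σ = g := by decide +kernel

lemma equiv_of_pair {M : Subgroup A6} (hM : IsCoatom M) (s : Finset (Fin 6)) (hs : s.card = 2)
    (h : ∀ m ∈ M, m • s = s) : Nonempty (M ≃* Perm (Fin 4)) := by
  have he : ∀ s : Finset (Fin 6), s.card = 2 → ∃ e : Perm (Fin 6), e • ({4, 5} : Finset _) = s := by
    decide +kernel
  obtain ⟨e, he⟩ := he s hs
  refine equiv_of_hom hM signHom ((injective_iff_map_eq_one _).2 (by decide +kernel)) (by decide +kernel) e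
    fun m hm => signHom_surj _ ?_ ?_
  rotate_left
  · have := Perm.mem_alternatingGroup.1 m.2
    simp [this]
  · rw [mul_smul, mul_smul, he, inv_smul_eq_iff, he]
    exact h m hm

lemma equiv_of_involution {M : Subgroup A6} (hM : IsCoatom M) (t : Perm (Fin 6))
    (ht : t * t = 1) (hp : ∀ p, t p ≠ p) (h : ∀ m ∈ M, (m : Perm (Fin 6)) * t = t * m) :
    Nonempty (M ≃* Perm (Fin 4)) := by
  have he : ∀ t : Perm (Fin 6), t * t = 1 → (∀ p, t p ≠ p) →
      ∃ e : Perm (Fin 6), e * tau * e⁻¹ = t := by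
    decide +kernel
  obtain ⟨e, rfl⟩ := he t ht hp
  refine equiv_of_hom hM pairHom ((injective_iff_map_eq_one _).2 (by decide +kernel)) (by decide +kernel) e
    fun m hm => pairHom_surj _ ?_ ?_
  rotate_left
  · have := Perm.mem_alternatingGroup.1 m.2
    simp [this]
  · have := h m hm
    calc e⁻¹ * m * e * tau = e⁻¹ * (m * (e * tau * e⁻¹)) * e := by group
      _ = e⁻¹ * (e * tau * e⁻¹ * m) * e := by rw [this]
      _ = tau * (e⁻¹ * m * e) := by group

/-! ### Stabilizers of a partition into two triples -/

lemma card_triples : Fintype.card {g : A6 //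
    g • ({{0, 1, 2}, {0, 1, 2}ᶜ} : Finset (Finset (Fin 6))) = {{0, 1, 2}, {0, 1, 2}ᶜ}} = 36 := by
  decide +kernel

lemma smul_compl (m : A6) (s : Finset (Fin 6)) : m • sᶜ = (m • s)ᶜ := by
  ext x
  simp [Finset.mem_compl, ← Finset.inv_smul_mem_iff]

lemma card_of_triples {M : Subgroup A6} (hM : IsCoatom M) (s : Finset (Fin 6)) (hs : s.card = 3)
    (h : ∀ m ∈ M, m • s = s ∨ m • s = sᶜ) : Nat.card M = 36 := by
  have hc : Nat.card (stabilizer A6 ({s, sᶜ} : Finset (Finset (Fin 6)))) = 36 := by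
    have he : ∀ s : Finset (Fin 6), s.card = 3 → ∃ e : A6, e • ({0, 1, 2} : Finset _) = s := by
      decide +kernel
    obtain ⟨e, rfl⟩ := he s hs
    rw [← smul_compl, ← Finset.smul_finset_singleton, ← Finset.smul_finset_insert,
      stabilizer_smul_eq_stabilizer_map_conj,
      Subgroup.card_map_of_injective (MulAut.conj e).injective, ← card_triples,
      ← Nat.card_eq_fintype_card]
    rfl
  have : M = stabilizer A6 ({s, sᶜ} : Finset (Finset (Fin 6))) := by
    refine eq_of_le hM ?_ ?_
    · intro m hm
      rw [mem_stabilizer_iff, Finset.smul_finset_insert, Finset.smul_finset_singleton, smul_compl]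
      rcases h m hm with h | h <;> rw [h]
      rw [compl_compl, Finset.pair_comm]
    · intro ht
      rw [ht, Subgroup.card_top, card_A6] at hc
      omega
  rw [this, hc]

/-! ### Imprimitive subgroups -/

/-- The block `{a, b}` and its translates are the orbits of the involution `g • a ↦ g • b`, which
commutes with `M`. -/
lemma equiv_of_block_two {M : Subgroup A6} (hM : IsCoatom M) [IsPretransitive M (Fin 6)]
    {B : Set (Fin 6)} (hB : IsBlock M B) (hc : B.ncard = 2) : Nonempty (M ≃* Perm (Fin 4)) := by
  obtain ⟨a, b, hab, rfl⟩ := Set.ncard_eq_two.1 hc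
  have key : ∀ g : M, (g • a = a → g • b = b) ∧ (g • a = b → g • b = a) := by
    intro g
    have h1 : g • a = a ∨ g • a = b → g • ({a, b} : Set (Fin 6)) = {a, b} := by
      intro h
      have hga : g • a ∈ ({a, b} : Set (Fin 6)) := by simpa using h
      exact hB.smul_eq_of_mem (by simp) hga
    have h2 : g • a = a ∨ g • a = b → g • b = a ∨ g • b = b := by
      intro h
      have : g • b ∈ g • ({a, b} : Set (Fin 6)) := Set.smul_mem_smul_set (by simp)
      rw [h1 h] at this
      simpa using this
    have h3 : g • a ≠ g • b := fun h => hab (smul_left_cancel g h)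
    grind
  choose r hr using fun x : Fin 6 => exists_smul_eq M a x
  let t : Fin 6 → Fin 6 := fun x => r x • b
  have ht : ∀ g : M, t (g • a) = g • b := by
    intro g
    have : (g⁻¹ * r (g • a)) • a = a := by rw [mul_smul, hr, inv_smul_smul]
    have := (key _).1 this
    rwa [mul_smul, inv_smul_eq_iff] at this
  have htt : ∀ x, t (t x) = x := by
    intro x
    have h1 : t x = (r x * r b) • a := by rw [mul_smul, hr b]
    rw [h1, ht, mul_smul, (key _).2 (hr b), hr]
  refine equiv_of_involution hM ⟨t, t, htt, htt⟩ (Equiv.ext htt) ?_ ?_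
  · intro p hp
    have : r p • b = r p • a := (hr p).symm ▸ hp
    exact hab (smul_left_cancel _ this).symm
  · intro m hm
    refine Equiv.ext fun x => ?_
    change (⟨m, hm⟩ : M) • t x = t ((⟨m, hm⟩ : M) • x)
    obtain ⟨y, rfl⟩ := exists_smul_eq M a x
    rw [ht, smul_smul, smul_smul, ht]

lemma card_of_block_three {M : Subgroup A6} (hM : IsCoatom M)
    {B : Set (Fin 6)} (hB : IsBlock M B) (hc : B.ncard = 3) : Nat.card M = 36 := by
  classical
  obtain ⟨s, rfl⟩ : ∃ s : Finset (Fin 6), (s : Set (Fin 6)) = B := ⟨B.toFinset, by simp⟩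
  rw [Set.ncard_coe_finset] at hc
  refine card_of_triples hM s hc fun m hm => ?_
  rcases isBlock_iff_smul_eq_or_disjoint.1 hB ⟨m, hm⟩ with h | h
  · left
    rw [← Finset.coe_inj, Finset.coe_smul_finset]
    exact h
  · right
    refine Finset.eq_of_subset_of_card_le ?_ ?_
    · intro x hx
      rw [Finset.mem_compl]
      intro hxs
      have hx' := Finset.mem_coe.2 hx
      rw [Finset.coe_smul_finset] at hx'
      exact Set.disjoint_left.1 h hx' hxs
    · rw [Finset.card_smul_finset, Finset.card_compl, hc]
      simp

/-! ### Primitive subgroups -/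

/-- Jordan's theorem: a primitive group containing a three-cycle contains `A₆`. -/
lemma no_three_cycle {M : Subgroup A6} (hM : M ≠ ⊤) (hP : IsPreprimitive M (Fin 6))
    (g : A6) (hg : g ∈ M) : ¬ (g : Perm (Fin 6)).IsThreeCycle := by
  intro h3
  let G : Subgroup (Perm (Fin 6)) := M.map (alternatingGroup (Fin 6)).subtype
  have hG : IsPreprimitive G (Fin 6) := by
    let f : Fin 6 →ₑ[fun m : M => (⟨m, Subgroup.mem_map_of_mem _ m.2⟩ : G)] Fin 6 :=
      ⟨id, fun _ _ => rfl⟩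
    exact IsPreprimitive.of_surjective (f := f) Function.surjective_id
  have := Perm.alternatingGroup_le_of_isPreprimitive_of_isThreeCycle_mem hG h3
    (Subgroup.mem_map_of_mem _ hg)
  refine hM (top_le_iff.1 fun x _ => ?_)
  obtain ⟨y, hy, hxy⟩ := this x.2
  rwa [← Subtype.ext hxy]

/-- If the stabilizer of `a` in a primitive group fixes a second point `b`, it is trivial: being
maximal it equals the stabilizer of `b`, so it is normalized by any element taking `a` to `b`,
hence normal, hence it fixes every point. -/
lemma eq_one_of_stabilizer_le {M : Subgroup A6} (hP : IsPreprimitive M (Fin 6)) {a b : Fin 6}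
    (hab : a ≠ b) (h : ∀ g : M, g • a = a → g • b = b) (g : M) (hg : g • a = a) : g = 1 := by
  have hco : ∀ x : Fin 6, IsCoatom (stabilizer M x) := fun x =>
    IsPreprimitive.isCoatom_stabilizer_of_isPreprimitive M x
  have hle : stabilizer M a ≤ stabilizer M b := fun g hg => h g hg
  have heq : stabilizer M a = stabilizer M b :=
    (((hco a).le_iff.1 hle).resolve_left (hco b).1).symm
  obtain ⟨k, hk⟩ := exists_smul_eq M a b
  have hkn : k ∈ Subgroup.normalizer (stabilizer M a : Set M) := by
    rw [Subgroup.mem_normalizer_iff]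
    intro x
    have hx : k * x * k⁻¹ ∈ stabilizer M a ↔ k * x * k⁻¹ ∈ stabilizer M b := by rw [heq]
    rw [hx, mem_stabilizer_iff, mem_stabilizer_iff, ← hk, smul_smul,
      inv_mul_cancel_right, mul_smul, smul_left_cancel_iff]
  have htop : Subgroup.normalizer (stabilizer M a : Set M) = ⊤ := by
    refine ((hco a).le_iff.1 Subgroup.le_normalizer).resolve_right fun h => ?_
    rw [h, mem_stabilizer_iff, hk] at hkn
    exact hab hkn.symm
  have hall : ∀ x : Fin 6, g • x = x := by
    intro x
    obtain ⟨y, rfl⟩ := exists_smul_eq M a x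
    have hy : y⁻¹ ∈ Subgroup.normalizer (stabilizer M a : Set M) := htop ▸ Subgroup.mem_top _
    have := (Subgroup.mem_normalizer_iff.1 hy g).1 hg
    rw [inv_inv] at this
    have := mem_stabilizer_iff.1 this
    rwa [mul_smul, mul_smul, inv_smul_eq_iff] at this
  exact Subtype.ext (Subtype.ext (Equiv.ext hall))

/-- A primitive proper subgroup `M` has order 60. Some involution fixes a point `p`, so the order
of the stabilizer `M_p` is even; it divides 60 and, without three-cycles, is prime to 3. It is
not a power of 2, which leaves 10 and 20, and 20 would give `M` index 3. -/
lemma index_eq_six_of_primitive {M : Subgroup A6} (hM : M ≠ ⊤) (hP : IsPreprimitive M (Fin 6)) :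
    M.index = 6 := by
  have hcard : ∀ p : Fin 6, Nat.card (stabilizer M p) * 6 = Nat.card M := by
    intro p
    rw [← Subgroup.card_mul_index (stabilizer M p), index_stabilizer_of_transitive, Nat.card_fin]
  -- An involution in `M` is even, so it has cycle type `2²` and fixes a point.
  obtain ⟨t, ht⟩ := exists_prime_orderOf_dvd_card' (G := M) 2
    (Dvd.intro_left (Nat.card (stabilizer M (0 : Fin 6)) * 3) (by rw [← hcard 0]; exact mul_assoc _ 3 2))
  have ht2 : t * t = 1 := by rw [← pow_two, ← ht, pow_orderOf_eq_one]
  have ht1 : t ≠ 1 := by rintro rfl; simp at ht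
  have hfix : ∀ t : Perm (Fin 6), t * t = 1 → Perm.sign t = 1 → ∃ p, t p = p := by decide +kernel
  obtain ⟨p, hp⟩ : ∃ p : Fin 6, t • p = p :=
    hfix t (by exact_mod_cast congrArg (fun x : M => ((x : A6) : Perm (Fin 6))) ht2)
      (Perm.mem_alternatingGroup.1 (t : A6).2)
  -- Elements of order three in a point stabilizer are three-cycles.
  have h3 : ¬ 3 ∣ Nat.card (stabilizer M p) := by
    intro h
    have : Fact (Nat.Prime 3) := ⟨by norm_num⟩
    obtain ⟨g, hg⟩ := exists_prime_orderOf_dvd_card' (G := stabilizer M p) 3 h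
    have hcyc : ∀ g : Perm (Fin 6), g ^ 3 = 1 → g ≠ 1 → (∃ p, g p = p) → g.support.card = 3 := by
      decide +kernel
    refine no_three_cycle hM hP (g : M) (g : M).2 (card_support_eq_three_iff.1 ?_)
    refine hcyc _ ?_ ?_ ⟨p, g.2⟩
    · have : g ^ 3 = 1 := by rw [← hg, pow_orderOf_eq_one]
      exact congrArg (fun x : stabilizer M p => (((x : M) : A6) : Perm (Fin 6))) this
    · intro h1
      have : g = 1 := Subtype.ext (Subtype.ext (Subtype.ext h1))
      rw [this] at hg
      simp at hg
  have h2 : 2 ∣ Nat.card (stabilizer M p) := by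
    have := orderOf_dvd_natCard (⟨t, hp⟩ : stabilizer M p)
    rwa [← orderOf_injective _ (stabilizer M p).subtype_injective, Subgroup.subtype_apply, ht] at this
  have hMi := Subgroup.card_mul_index M
  rw [card_A6, ← hcard p] at hMi
  have hdvd : Nat.card (stabilizer M p) ∣ 60 := ⟨M.index, by linarith⟩
  have hfac := dvd_factorial_index hM
  generalize hn : Nat.card (stabilizer M p) = n at *
  have hle : n ≤ 60 := Nat.le_of_dvd (by norm_num) hdvd
  have hvals : n = 2 ∨ n = 4 ∨ n = 10 ∨ n = 20 := by
    interval_cases n <;> omega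
  -- A stabilizer that is a 2-group fixes an even number of points, hence at least two.
  have hp2 : ∀ k, n ≠ 2 ^ k := by
    rintro k rfl
    have : Fact (Nat.Prime 2) := ⟨by norm_num⟩
    obtain ⟨b, hb, hpb⟩ := (IsPGroup.of_card hn).exists_fixed_point_of_prime_dvd_card_of_fixed_point
      (Fin 6) (by simp) (a := p) (fun g => g.2)
    exact ht1 (eq_one_of_stabilizer_le hP hpb (fun g hg => hb ⟨g, hg⟩) t hp)
  rcases hvals with rfl | rfl | rfl | rfl
  · exact absurd rfl (hp2 1)
  · exact absurd rfl (hp2 2)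
  · omega
  · have : M.index = 3 := by omega
    rw [this] at hfac
    exact absurd hfac (by decide)

end A6Max

open A6Max in
/-- Every maximal subgroup of `A₆` is isomorphic to `A₅`, or isomorphic to `S₄`,
or has cardinality 36. -/
theorem a6_maximal_subgroups
    (M : Subgroup (alternatingGroup (Fin 6))) (hM : IsCoatom M) :
    Nonempty (M ≃* alternatingGroup (Fin 5)) ∨
    Nonempty (M ≃* Equiv.Perm (Fin 4)) ∨
    Nat.card M = 36 := by
  classical
  by_cases hT : IsPretransitive M (Fin 6)
  · by_cases hP : IsPreprimitive M (Fin 6)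
    · exact Or.inl (equiv_of_index_eq_six (index_eq_six_of_primitive hM.1 hP))
    · obtain ⟨B, hB, hBt⟩ : ∃ B : Set (Fin 6), IsBlock M B ∧ ¬ IsTrivialBlock B := by
        by_contra! h
        exact hP ⟨fun {B} hB => h B hB⟩
      rw [IsTrivialBlock, not_or, Set.not_subsingleton_iff] at hBt
      have hd : B.ncard ∣ 6 := by
        simpa using hB.ncard_dvd_card hBt.1.nonempty
      have h1 : 1 < B.ncard := Set.one_lt_ncard_iff_nontrivial.2 hBt.1
      have h6 : B.ncard < 6 := by
        simpa using Set.ncard_lt_card hBt.2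
      generalize hn : B.ncard = n at *
      interval_cases n
      · exact Or.inr (Or.inl (equiv_of_block_two hM hB hn))
      · exact Or.inr (Or.inr (card_of_block_three hM hB hn))
      · omega
      · omega
  · -- An orbit or its complement is an invariant set of one, two or three points.
    obtain ⟨s, h0, h3, hs⟩ : ∃ s : Finset (Fin 6), 0 < s.card ∧ s.card ≤ 3 ∧
        ∀ m ∈ M, m • s = s := by
      have horb : ∀ m ∈ M, m • (orbit M (0 : Fin 6)).toFinset = (orbit M (0 : Fin 6)).toFinset := by
        intro m hm
        rw [← Finset.coe_inj, Finset.coe_smul_finset, Set.coe_toFinset]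
        exact smul_orbit (⟨m, hm⟩ : M) (0 : Fin 6)
      have hne : (orbit M (0 : Fin 6)).toFinset ≠ Finset.univ := by
        intro h
        refine hT ((isPretransitive_iff_orbit_eq_univ (G := M) (0 : Fin 6)).2 ?_)
        simpa using h
      have hpos : 0 < (orbit M (0 : Fin 6)).toFinset.card :=
        Finset.card_pos.2 ⟨0, by simp [mem_orbit_self]⟩
      have hlt := Finset.card_lt_card (Finset.ssubset_univ_iff.2 hne)
      generalize (orbit M (0 : Fin 6)).toFinset = s at *
      rw [Finset.card_univ, Fintype.card_fin] at hlt
      by_cases h : s.card ≤ 3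
      · exact ⟨s, hpos, h, horb⟩
      · refine ⟨sᶜ, ?_, ?_, fun m hm => ?_⟩
        · rw [Finset.card_compl, Fintype.card_fin]; omega
        · rw [Finset.card_compl, Fintype.card_fin]; omega
        · rw [smul_compl, horb m hm]
    generalize hn : s.card = n at *
    interval_cases n
    · obtain ⟨p, rfl⟩ := Finset.card_eq_one.1 hn
      refine Or.inl (equiv_of_fixed hM p fun m hm => ?_)
      simpa using hs m hm
    · exact Or.inr (Or.inl (equiv_of_pair hM s hn hs))
    · exact Or.inr (Or.inr (card_of_triples hM s hn fun m hm => Or.inl (hs m hm)))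
end

section
/- The subgroups of the alternating group A_6 that are isomorphic to the alternating group A_5 form exactly two orbits under the conjugation action of A_6 on its subgroups. -/
/-!
Fix the generators `s = (0 1)(2 3)` and `t = (1 2 4)` of `A₅`, for which `s² = t³ = (s t)⁵ = 1`.
A subgroup of `A₆` isomorphic to `A₅` is the range of an injective homomorphism `f`, and is
generated by `f s` and `f t`.

*At most two classes.* In `A₆` the elements of order `3` form two classes, the `3`-cycles and the
products of two disjoint `3`-cycles (`isConj_Y₁_or_Y₂`), so up to conjugation `f t` is `(0 1 2)` or
`(0 1 2)(3 4 5)`. For either value `y` of `f t`, exactly `18` elements `x` satisfy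
`x² = (x y)⁵ = 1`, and they form two orbits under the centralizer `⟨(0 1 2), (3 4 5)⟩` of `y` in
`A₆`. These orbits are exchanged by replacing `f s` by `f r`, where `r` is the conjugate of `s`
under an odd permutation centralizing `t`; as `r` and `t` generate `A₅` too, both orbits give the
same class of subgroups (`key₁`, `key₂`, `Represents.subgroupsConj`).

*At least two classes.* The point stabilizer is a copy of `A₅` with a fixed point, whereas the
action of `A₅` on its six Sylow `5`-subgroups gives a transitive copy (`exists_nonconj`).
-/

/-- Two subgroups of a group are conjugate if one is mapped to the other by
conjugation by some group element. -/
def SubgroupsConj {G : Type*} [Group G] (H K : Subgroup G) : Prop :=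
  ∃ g : G, Subgroup.map (MulAut.conj g).toMonoidHom H = K

open Equiv Equiv.Perm

namespace A5InA6

/-- The involution `(0 1)(2 3)` of `A₅`. -/
def s : alternatingGroup (Fin 5) := ⟨swap 0 1 * swap 2 3, mem_alternatingGroup.2 (by decide)⟩

/-- The `3`-cycle `(1 2 4)` of `A₅`; the product `s * t` is a `5`-cycle. -/
def t : alternatingGroup (Fin 5) := ⟨swap 1 2 * swap 2 4, mem_alternatingGroup.2 (by decide)⟩

/-- The image `(1 3)(0 2)` of `s` under conjugation by the odd permutation `(0 3)`, which
centralizes `t`. -/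
def r : alternatingGroup (Fin 5) := ⟨swap 1 3 * swap 0 2, mem_alternatingGroup.2 (by decide)⟩

lemma r_eq : r = t * s * t⁻¹ * s * t * s * t⁻¹ * s * t := by decide +kernel

lemma card_A5 : Nat.card (alternatingGroup (Fin 5)) = 60 := by
  rw [nat_card_alternatingGroup]; simp; rfl

/-- A subgroup of `A₅` whose order is divisible by `30` has index at most `2`, hence is normal,
hence is everything. -/
lemma closure_eq_top (u v : alternatingGroup (Fin 5)) (h2 : orderOf u = 2) (h3 : orderOf v = 3)
    (h5 : orderOf (u * v) = 5) : Subgroup.closure {u, v} = ⊤ := by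
  set H := Subgroup.closure {u, v} with hH
  have hu : u ∈ H := Subgroup.subset_closure (by simp)
  have hv : v ∈ H := Subgroup.subset_closure (by simp)
  have d2 : 2 ∣ Nat.card H := h2 ▸ Subgroup.orderOf_dvd_natCard H hu
  have d3 : 3 ∣ Nat.card H := h3 ▸ Subgroup.orderOf_dvd_natCard H hv
  have d5 : 5 ∣ Nat.card H := by
    have := Subgroup.orderOf_dvd_natCard H (H.mul_mem hu hv)
    rwa [h5] at this
  have d30 : 30 ∣ Nat.card H := by omega
  obtain ⟨k, hk⟩ := d30
  have hc := H.card_mul_index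
  rw [card_A5, hk] at hc
  have hki : k * H.index = 2 := by nlinarith
  have hidx : H.index = 1 ∨ H.index = 2 :=
    (Nat.dvd_prime Nat.prime_two).1 ⟨k, by linarith⟩
  rcases hidx with h | h
  · exact Subgroup.index_eq_one.1 h
  · have hn : H.Normal := Subgroup.normal_of_index_eq_two h
    rcases hn.eq_bot_or_eq_top with hb | ht
    · rw [hb, Subgroup.mem_bot] at hu
      simp [hu] at h2
    · exact ht

lemma closure_s_t : Subgroup.closure {s, t} = ⊤ :=
  have : Fact (Nat.Prime 5) := ⟨by norm_num⟩
  closure_eq_top s t (orderOf_eq_prime (by decide) (by decide))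
    (orderOf_eq_prime (by decide) (by decide)) (orderOf_eq_prime (by decide) (by decide))

lemma closure_r_t : Subgroup.closure {r, t} = ⊤ :=
  have : Fact (Nat.Prime 5) := ⟨by norm_num⟩
  closure_eq_top r t (orderOf_eq_prime (by decide) (by decide))
    (orderOf_eq_prime (by decide) (by decide)) (orderOf_eq_prime (by decide) (by decide))

/-- The `3`-cycle `(0 1 2)` in `S₆`. -/
def a : Perm (Fin 6) := swap 0 1 * swap 1 2

/-- The `3`-cycle `(3 4 5)` in `S₆`. -/
def b : Perm (Fin 6) := swap 3 4 * swap 4 5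

/-- The involution `(1 3)(2 4)`; together with `a` it generates an intransitive `A₅`. -/
def x₁ : Perm (Fin 6) := swap 1 3 * swap 2 4

/-- The involution `(2 3)(4 5)`; together with `a * b` it generates a transitive `A₅`. -/
def x₂ : Perm (Fin 6) := swap 2 3 * swap 4 5

/-- Every `x` satisfying with `a` the relations of `(s, t)` is carried to `x₁` by the centralizer
`⟨a, b⟩` of `a` in `A₆`, possibly after replacing `x` by the word of `r_eq`. -/
lemma key₁ : ∀ x : Perm (Fin 6), x * x = 1 → (x * a) ^ 5 = 1 → ∃ i j : Fin 3,
    (a ^ i.val * b ^ j.val) * x₁ = x * (a ^ i.val * b ^ j.val) ∨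
    (a ^ i.val * b ^ j.val) * x₁ =
      (a * x * a⁻¹ * x * a * x * a⁻¹ * x * a) * (a ^ i.val * b ^ j.val) := by
  decide +kernel

/-- The analogue of `key₁` for the class of `a * b`, whose centralizer in `A₆` is again
`⟨a, b⟩`. -/
lemma key₂ : ∀ x : Perm (Fin 6), x * x = 1 → (x * (a * b)) ^ 5 = 1 → ∃ i j : Fin 3,
    (a ^ i.val * b ^ j.val) * x₂ = x * (a ^ i.val * b ^ j.val) ∨
    (a ^ i.val * b ^ j.val) * x₂ =
      ((a * b) * x * (a * b)⁻¹ * x * (a * b) * x * (a * b)⁻¹ * x * (a * b)) *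
        (a ^ i.val * b ^ j.val) := by
  decide +kernel

lemma a_mem : a ∈ alternatingGroup (Fin 6) := mem_alternatingGroup.2 (by decide)
lemma b_mem : b ∈ alternatingGroup (Fin 6) := mem_alternatingGroup.2 (by decide)

/-- The representative `(0 1 2)` of the class of `3`-cycles in `A₆`. -/
def Y₁ : alternatingGroup (Fin 6) := ⟨a, a_mem⟩

/-- The representative `(0 1 2)(3 4 5)` of the class of products of two `3`-cycles in `A₆`. -/
def Y₂ : alternatingGroup (Fin 6) := ⟨a * b, mul_mem a_mem b_mem⟩

/-- The involution `x₁`, as an element of `A₆`. -/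
def X₁ : alternatingGroup (Fin 6) := ⟨x₁, mem_alternatingGroup.2 (by decide)⟩

/-- The involution `x₂`, as an element of `A₆`. -/
def X₂ : alternatingGroup (Fin 6) := ⟨x₂, mem_alternatingGroup.2 (by decide)⟩

/-- The pair `(x₀, y₀)` represents, up to conjugation in `A₆`, all pairs `(x, y₀)` satisfying the
relations of `(s, t)`, provided `x` may be replaced by the word that expresses `r` in `s`
and `t`. -/
def Represents (x₀ y₀ : alternatingGroup (Fin 6)) : Prop :=
  ∀ x, x * x = 1 → (x * y₀) ^ 5 = 1 → ∃ g, g * y₀ = y₀ * g ∧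
    (g * x₀ = x * g ∨ g * x₀ = (y₀ * x * y₀⁻¹ * x * y₀ * x * y₀⁻¹ * x * y₀) * g)

lemma represents₁ : Represents X₁ Y₁ := by
  intro x hx hxy
  obtain ⟨i, j, h⟩ := key₁ x (congrArg Subtype.val hx) (congrArg Subtype.val hxy)
  refine ⟨⟨a ^ i.val * b ^ j.val, mul_mem (pow_mem a_mem _) (pow_mem b_mem _)⟩,
    Subtype.ext ?_, h.imp Subtype.ext Subtype.ext⟩
  have hab : Commute a b := by unfold Commute SemiconjBy; decide
  exact (((Commute.refl a).pow_left _).mul_left (hab.symm.pow_left _)).eq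

lemma represents₂ : Represents X₂ Y₂ := by
  intro x hx hxy
  obtain ⟨i, j, h⟩ := key₂ x (congrArg Subtype.val hx) (congrArg Subtype.val hxy)
  refine ⟨⟨a ^ i.val * b ^ j.val, mul_mem (pow_mem a_mem _) (pow_mem b_mem _)⟩,
    Subtype.ext ?_, h.imp Subtype.ext Subtype.ext⟩
  have hab : Commute a b := by unfold Commute SemiconjBy; decide
  exact ((((Commute.refl a).mul_right hab).pow_left _).mul_left
    ((hab.symm.mul_right (Commute.refl b)).pow_left _)).eq

lemma closure_map_eq_range (f : alternatingGroup (Fin 5) →* alternatingGroup (Fin 6))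
    {u v : alternatingGroup (Fin 5)} (h : Subgroup.closure {u, v} = ⊤) :
    Subgroup.closure {f u, f v} = f.range := by
  rw [MonoidHom.range_eq_map, ← h, MonoidHom.map_closure, Set.image_pair]

lemma Represents.subgroupsConj {x₀ y₀ : alternatingGroup (Fin 6)} (H : Represents x₀ y₀)
    (f : alternatingGroup (Fin 5) →* alternatingGroup (Fin 6)) (hc : IsConj y₀ (f t)) :
    SubgroupsConj (Subgroup.closure {x₀, y₀}) f.range := by
  obtain ⟨g, hg⟩ := isConj_iff.1 hc
  have hgx : g * (g⁻¹ * f s * g) * g⁻¹ = f s := by group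
  have hss : s * s = 1 := by decide
  have hst : (s * t) ^ 5 = 1 := by decide
  generalize g⁻¹ * f s * g = x at hgx
  rw [← MulAut.conj_apply] at hg hgx
  obtain ⟨h, hy, hx⟩ := H x
    ((MulAut.conj g).injective (by rw [map_mul, hgx, ← map_mul, hss, map_one, map_one]))
    ((MulAut.conj g).injective
      (by rw [map_pow, map_mul, hgx, hg, ← map_mul, ← map_pow, hst, map_one, map_one]))
  have hy' : MulAut.conj (g * h) y₀ = f t := by
    rw [map_mul, MulAut.mul_apply, MulAut.conj_apply h, hy, mul_inv_cancel_right, hg]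
  refine ⟨g * h, ?_⟩
  rw [MonoidHom.map_closure, Set.image_pair]
  simp only [MulEquiv.toMonoidHom_eq_coe, MonoidHom.coe_coe, hy']
  rcases hx with hx | hx
  · have hx' : MulAut.conj (g * h) x₀ = f s := by
      rw [map_mul, MulAut.mul_apply, MulAut.conj_apply h, hx, mul_inv_cancel_right, hgx]
    rw [hx', closure_map_eq_range f closure_s_t]
  · have hx' : MulAut.conj (g * h) x₀ = f r := by
      rw [map_mul, MulAut.mul_apply, MulAut.conj_apply h, hx, mul_inv_cancel_right, r_eq]
      simp only [map_mul, map_inv, hgx, hg]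
    rw [hx', closure_map_eq_range f closure_r_t]

/-- If the centralizer of `y₀` in `S₆` contains an odd permutation, then the `S₆`-class of `y₀`
is a single `A₆`-class. -/
lemma isConj_of_odd_commute {y₀ y : alternatingGroup (Fin 6)} (c : Perm (Fin 6))
    (hc : sign c = -1) (hcy : Commute c y₀) (h : IsConj (y₀ : Perm (Fin 6)) y) :
    IsConj y₀ y := by
  obtain ⟨π, hπ⟩ := isConj_iff.1 h
  rcases Int.units_eq_one_or (sign π) with h1 | h1
  · exact isConj_iff.2 ⟨⟨π, mem_alternatingGroup.2 h1⟩, Subtype.ext hπ⟩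
  · refine isConj_iff.2 ⟨⟨π * c, mem_alternatingGroup.2 (by simp [h1, hc])⟩, Subtype.ext ?_⟩
    change π * c * y₀ * (π * c)⁻¹ = y
    rw [mul_assoc π, hcy.eq, ← hπ]
    group

lemma cycleType_a : a.cycleType = {3} := by decide +kernel
lemma cycleType_ab : (a * b).cycleType = {3, 3} := by decide +kernel

lemma isConj_Y₁_or_Y₂ (y : alternatingGroup (Fin 6)) (h3 : y ^ 3 = 1) (h1 : y ≠ 1) :
    IsConj Y₁ y ∨ IsConj Y₂ y := by
  have h3' : (y : Perm (Fin 6)) ^ 3 = 1 := congrArg Subtype.val h3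
  have hct := cycleType_of_pow_prime_eq_one h3'
  have hle := sum_cycleType_le (y : Perm (Fin 6))
  have hne : (y : Perm (Fin 6)).cycleType.card ≠ 0 := fun h =>
    h1 (Subtype.ext (card_cycleType_eq_zero.1 h))
  generalize (y : Perm (Fin 6)).cycleType.card = n at hct hne
  rw [hct, Multiset.sum_replicate, Fintype.card_fin, smul_eq_mul] at hle
  have hn : n = 1 ∨ n = 2 := by omega
  rcases hn with rfl | rfl
  · refine Or.inl (isConj_of_odd_commute (swap 3 4) (by decide)
      (by unfold Commute SemiconjBy; decide) (isConj_iff_cycleType_eq.2 ?_))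
    rw [hct]; exact cycleType_a
  · refine Or.inr (isConj_of_odd_commute (swap 0 3 * swap 1 4 * swap 2 5) (by decide)
      (by unfold Commute SemiconjBy; decide) (isConj_iff_cycleType_eq.2 ?_))
    rw [hct]; exact cycleType_ab

lemma conj_closure₁_or_closure₂ (f : alternatingGroup (Fin 5) →* alternatingGroup (Fin 6))
    (hf : Function.Injective f) :
    SubgroupsConj (Subgroup.closure {X₁, Y₁}) f.range ∨
      SubgroupsConj (Subgroup.closure {X₂, Y₂}) f.range := by
  have ht3 : t ^ 3 = 1 := by decide
  have ht1 : t ≠ 1 := by decide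
  exact (isConj_Y₁_or_Y₂ (f t) (by rw [← map_pow, ht3, map_one])
    (fun h => ht1 (hf (h.trans (map_one f).symm)))).imp
      (represents₁.subgroupsConj f) (represents₂.subgroupsConj f)

lemma subgroupsConj_symm {G : Type*} [Group G] {H K : Subgroup G} (h : SubgroupsConj H K) :
    SubgroupsConj K H := by
  obtain ⟨g, rfl⟩ := h
  refine ⟨g⁻¹, ?_⟩
  rw [Subgroup.map_map]
  convert Subgroup.map_id H
  ext x
  simp [mul_assoc]

lemma subgroupsConj_trans {G : Type*} [Group G] {H K L : Subgroup G} (h : SubgroupsConj H K)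
    (h' : SubgroupsConj K L) : SubgroupsConj H L := by
  obtain ⟨g, rfl⟩ := h
  obtain ⟨k, rfl⟩ := h'
  refine ⟨k * g, ?_⟩
  rw [Subgroup.map_map]
  congr 1
  ext x
  simp [mul_assoc]

/-- Since `A₅` is simple of order greater than `2`, it has no nontrivial sign character. -/
lemma hom_mem_alternatingGroup (φ : alternatingGroup (Fin 5) →* Perm (Fin 6))
    (u : alternatingGroup (Fin 5)) : φ u ∈ alternatingGroup (Fin 6) := by
  rw [mem_alternatingGroup]
  rcases (inferInstance : (sign.comp φ).ker.Normal).eq_bot_or_eq_top with h | h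
  · have hinj := (MonoidHom.ker_eq_bot_iff _).1 h
    have := Nat.card_le_card_of_injective _ hinj
    rw [card_A5] at this
    simp at this
  · exact (MonoidHom.mem_ker (f := sign.comp φ)).1 (h ▸ Subgroup.mem_top u)

lemma hom_injective (φ : alternatingGroup (Fin 5) →* Perm (Fin 6)) {u : alternatingGroup (Fin 5)}
    (hu : φ u ≠ 1) : Function.Injective φ := by
  rcases (inferInstance : φ.ker.Normal).eq_bot_or_eq_top with h | h
  · exact (MonoidHom.ker_eq_bot_iff _).1 h
  · exact absurd (MonoidHom.mem_ker.1 (h ▸ Subgroup.mem_top u)) hu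

/-- The standard embedding of `A₅` into `S₆`, fixing the last letter. -/
def pointHom : alternatingGroup (Fin 5) →* Perm (Fin 6) :=
  (extendDomainHom (finSuccAboveEquiv (Fin.last 5))).comp (alternatingGroup (Fin 5)).subtype

lemma pointHom_last (u : alternatingGroup (Fin 5)) : pointHom u 5 = 5 :=
  extendDomain_apply_not_subtype _ _ (by simp [Fin.last])

lemma pointHom_injective : Function.Injective pointHom :=
  (extendDomainHom_injective _).comp Subtype.val_injective

/-- `A₅` has six Sylow `5`-subgroups: their number is `1` modulo `5` and divides `12`, and it is
not `1` because `A₅` is simple. -/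
lemma card_sylow_five : Nat.card (Sylow 5 (alternatingGroup (Fin 5))) = 6 := by
  have : Fact (Nat.Prime 5) := ⟨by norm_num⟩
  let P : Sylow 5 (alternatingGroup (Fin 5)) := default
  have hP : Nat.card P = 5 := by
    rw [P.card_eq_multiplicity, card_A5]
    have : Nat.factorization 60 5 = 1 := by
      rw [Nat.factorization_def _ (by norm_num)]
      have h : (60 : ℕ) = 5 ^ 1 * 12 := by norm_num
      rw [h, padicValNat_base_pow_mul (by norm_num) (by norm_num),
        padicValNat.eq_zero_of_not_dvd (by norm_num)]
    rw [this, pow_one]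
  have hidx : (P : Subgroup (alternatingGroup (Fin 5))).index = 12 := by
    have := (P : Subgroup (alternatingGroup (Fin 5))).card_mul_index
    rw [card_A5] at this
    have hP' : Nat.card (P : Subgroup (alternatingGroup (Fin 5))) = 5 := hP
    rw [hP'] at this
    omega
  have hdvd := P.card_dvd_index
  rw [hidx] at hdvd
  have hmod := card_sylow_modEq_one 5 (alternatingGroup (Fin 5))
  have hne : Nat.card (Sylow 5 (alternatingGroup (Fin 5))) ≠ 1 := by
    intro h1
    have hsub : Subsingleton (Sylow 5 (alternatingGroup (Fin 5))) :=
      (Nat.card_eq_one_iff_unique.1 h1).1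
    have hn : (P : Subgroup (alternatingGroup (Fin 5))).Normal := P.normal_of_subsingleton
    rcases hn.eq_bot_or_eq_top with h | h
    · rw [h, Subgroup.index_bot, card_A5] at hidx
      omega
    · rw [h, Subgroup.index_top] at hidx
      omega
  have hle := Nat.le_of_dvd (by norm_num) hdvd
  unfold Nat.ModEq at hmod
  generalize Nat.card (Sylow 5 (alternatingGroup (Fin 5))) = n at *
  interval_cases n <;> omega

/-- The transitive action of `A₅` on its six Sylow `5`-subgroups. -/
lemma exists_transitive_hom : ∃ φ : alternatingGroup (Fin 5) →* Perm (Fin 6),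
    ∀ i j, ∃ u, φ u i = j := by
  have : Fact (Nat.Prime 5) := ⟨by norm_num⟩
  let e : Sylow 5 (alternatingGroup (Fin 5)) ≃ Fin 6 := Finite.equivFinOfCardEq card_sylow_five
  refine ⟨(e.permCongrHom.toMonoidHom).comp (MulAction.toPermHom _ _), fun i j => ?_⟩
  obtain ⟨u, hu⟩ := MulAction.exists_smul_eq (alternatingGroup (Fin 5)) (e.symm i) (e.symm j)
  refine ⟨u, ?_⟩
  simp [hu]

lemma exists_nonconj : ∃ f k : alternatingGroup (Fin 5) →* alternatingGroup (Fin 6),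
    Function.Injective f ∧ Function.Injective k ∧ ¬ SubgroupsConj f.range k.range := by
  obtain ⟨φ, hφ⟩ := exists_transitive_hom
  refine ⟨pointHom.codRestrict _ (hom_mem_alternatingGroup _),
    φ.codRestrict _ (hom_mem_alternatingGroup _), ?_, ?_, ?_⟩
  · exact (MonoidHom.injective_codRestrict _ _ _).2 pointHom_injective
  · obtain ⟨u, hu⟩ := hφ 0 1
    refine (MonoidHom.injective_codRestrict _ _ _).2 (hom_injective φ (u := u) ?_)
    rintro h
    simp [h] at hu
  · rintro ⟨g, hg⟩
    -- A conjugate of the point stabilizer fixes the point `i`, but some `φ u` moves it.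
    obtain ⟨i, hi⟩ : ∃ i, i = (g : Perm (Fin 6)) 5 := ⟨_, rfl⟩
    obtain ⟨u, hu⟩ := hφ i (i + 1)
    have hmem : φ.codRestrict _ (hom_mem_alternatingGroup _) u ∈
        (φ.codRestrict _ (hom_mem_alternatingGroup φ)).range := ⟨u, rfl⟩
    rw [← hg] at hmem
    obtain ⟨_, ⟨v, rfl⟩, hv⟩ := hmem
    have hv' : (g : Perm (Fin 6)) * pointHom v * (g : Perm (Fin 6))⁻¹ = φ u :=
      congrArg Subtype.val hv
    rw [← hv', hi] at hu
    simp [pointHom_last] at hu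

end A5InA6

open A5InA6

/-- The subgroups of `A₆` isomorphic to `A₅` form exactly two orbits under the
conjugation action of `A₆`. -/
theorem a6_two_classes_of_a5_subgroups :
    ∃ H K : Subgroup (alternatingGroup (Fin 6)),
      Nonempty (H ≃* alternatingGroup (Fin 5)) ∧
      Nonempty (K ≃* alternatingGroup (Fin 5)) ∧
      ¬ SubgroupsConj H K ∧
      ∀ L : Subgroup (alternatingGroup (Fin 6)),
        Nonempty (L ≃* alternatingGroup (Fin 5)) →
        (SubgroupsConj H L ∨ SubgroupsConj K L) := by
  obtain ⟨f, k, hf, hk, hfk⟩ := exists_nonconj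
  refine ⟨f.range, k.range, ⟨(MonoidHom.ofInjective hf).symm⟩, ⟨(MonoidHom.ofInjective hk).symm⟩,
    hfk, ?_⟩
  rintro L ⟨e⟩
  have hL := conj_closure₁_or_closure₂ (L.subtype.comp e.symm.toMonoidHom)
    (L.subtype_injective.comp e.symm.injective)
  have hrange : (L.subtype.comp e.symm.toMonoidHom).range = L := by
    rw [MonoidHom.range_comp, MonoidHom.range_eq_top.2 e.symm.surjective,
      ← MonoidHom.range_eq_map, L.range_subtype]
  rw [hrange] at hL
  -- `f.range` and `k.range` lie in different classes, so between them they meet both.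
  rcases conj_closure₁_or_closure₂ f hf with h1 | h1 <;>
  rcases conj_closure₁_or_closure₂ k hk with h2 | h2
  · exact absurd (subgroupsConj_trans (subgroupsConj_symm h1) h2) hfk
  · exact hL.imp (subgroupsConj_trans (subgroupsConj_symm h1))
      (subgroupsConj_trans (subgroupsConj_symm h2))
  · exact hL.symm.imp (subgroupsConj_trans (subgroupsConj_symm h1))
      (subgroupsConj_trans (subgroupsConj_symm h2))
  · exact absurd (subgroupsConj_trans (subgroupsConj_symm h1) h2) hfk
end

section
/- The subgroups of the alternating group A_6 that are isomorphic to the symmetric group S_4 form exactly two orbits under the conjugation action of A_6 on its subgroups. -/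
open Equiv

/-! ### The two copies of `S₄` -/

/-- The isomorphism from `{1, -1}` to the symmetric group on two letters. -/
def unitsToPerm : ℤˣ →* Perm (Fin 2) where
  toFun u := if u = 1 then 1 else swap 0 1
  map_one' := rfl
  map_mul' := by decide

/-- `S₄` acting on `Fin 6`, naturally on the first four points and through the sign on the last
two. -/
def natPermHom : Perm (Fin 4) →* Perm (Fin 6) :=
  ((finSumFinEquiv (m := 4) (n := 2)).permCongrHom.toMonoidHom.comp
    (Perm.sumCongrHom (Fin 4) (Fin 2))).comp
      ((MonoidHom.id _).prod (unitsToPerm.comp Perm.sign))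

/-- The six 2-element subsets of `Fin 4`, each written as a pair. They are numbered so that
`(0 1 2 3)` permutes them as `(0 1 2 3)(4 5)`. -/
def pairOf : Fin 6 → Fin 4 × Fin 4 :=
  ![(0, 1), (1, 2), (2, 3), (3, 0), (0, 2), (1, 3)]

/-- The number of the 2-element subset `{a, b}` in the list `pairOf`; the value is irrelevant when
`a = b`. -/
def pairIndex (a b : Fin 4) : Fin 6 :=
  ![![0, 0, 4, 3], ![0, 0, 1, 5], ![4, 1, 0, 2], ![3, 5, 2, 0]] a b

lemma pairIndex_symm : ∀ a b, pairIndex a b = pairIndex b a := by decide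

lemma pairIndex_pairOf : ∀ i, pairIndex (pairOf i).1 (pairOf i).2 = i := by decide

lemma pairOf_ne : ∀ i, (pairOf i).1 ≠ (pairOf i).2 := by decide

lemma pairOf_pairIndex : ∀ a b, a ≠ b →
    pairOf (pairIndex a b) = (a, b) ∨ pairOf (pairIndex a b) = (b, a) := by decide

/-- The map on (numbered) 2-element subsets induced by a permutation. -/
def pairMap (σ : Perm (Fin 4)) (i : Fin 6) : Fin 6 :=
  pairIndex (σ (pairOf i).1) (σ (pairOf i).2)

lemma pairMap_mul (σ τ : Perm (Fin 4)) (i : Fin 6) :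
    pairMap (σ * τ) i = pairMap σ (pairMap τ i) := by
  have hne : τ (pairOf i).1 ≠ τ (pairOf i).2 := fun h => pairOf_ne i (τ.injective h)
  unfold pairMap
  rcases pairOf_pairIndex _ _ hne with h | h <;> rw [h]
  · rfl
  · rw [pairIndex_symm]; rfl

lemma pairMap_one (i : Fin 6) : pairMap 1 i = i := pairIndex_pairOf i

/-- `S₄` acting on the six 2-element subsets of `Fin 4`. -/
def pairPermHom : Perm (Fin 4) →* Perm (Fin 6) where
  toFun σ :=
    { toFun := pairMap σ
      invFun := pairMap σ⁻¹
      left_inv := fun i => by rw [← pairMap_mul, inv_mul_cancel, pairMap_one]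
      right_inv := fun i => by rw [← pairMap_mul, mul_inv_cancel, pairMap_one] }
  map_one' := Equiv.ext pairMap_one
  map_mul' σ τ := Equiv.ext (pairMap_mul σ τ)

/-- The action `natPermHom`, which is by even permutations, as a map to `A₆`. -/
def natHom : Perm (Fin 4) →* alternatingGroup (Fin 6) :=
  natPermHom.codRestrict _ (by
    simp only [Perm.mem_alternatingGroup]
    decide +kernel)

/-- The action `pairPermHom`, which is by even permutations, as a map to `A₆`. -/
def pairHom : Perm (Fin 4) →* alternatingGroup (Fin 6) :=
  pairPermHom.codRestrict _ (by
    simp only [Perm.mem_alternatingGroup]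
    decide +kernel)

lemma natHom_injective : Function.Injective natHom := by
  rw [injective_iff_map_eq_one]
  decide +kernel

lemma pairHom_injective : Function.Injective pairHom := by
  rw [injective_iff_map_eq_one]
  decide +kernel

/-! ### Elements of order 4 -/

/-- The permutation `(0 1 2 3)(4 5)`. -/
def c : Perm (Fin 6) := natPermHom (finRotate 4)

lemma natHom_finRotate : (natHom (finRotate 4) : Perm (Fin 6)) = c := rfl

lemma pairHom_finRotate : (pairHom (finRotate 4) : Perm (Fin 6)) = c := by decide +kernel

lemma cycleType_of_order_four (x : Perm (Fin 6)) (hs : Perm.sign x = 1) (h4 : x ^ 4 = 1)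
    (h2 : x ^ 2 ≠ 1) : x.cycleType = {4, 2} := by
  have hord : orderOf x ∣ 4 := orderOf_dvd_of_pow_eq_one h4
  have hparts : ∀ n ∈ x.cycleType, n = 2 ∨ n = 4 := by
    intro n hn
    have hd := (Perm.dvd_of_mem_cycleType hn).trans hord
    have h2n := Perm.two_le_of_mem_cycleType hn
    have hle := Nat.le_of_dvd (by norm_num) hd
    interval_cases n <;> simp_all
  have h4mem : 4 ∈ x.cycleType := by
    by_contra hno
    apply h2
    rw [← orderOf_dvd_iff_pow_eq_one, ← Perm.lcm_cycleType, Multiset.lcm_dvd]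
    intro n hn
    rcases hparts n hn with rfl | rfl
    · rfl
    · exact absurd hn hno
  obtain ⟨t, ht⟩ := Multiset.exists_cons_of_mem h4mem
  have hsum : x.cycleType.sum ≤ 6 := by
    rw [Perm.sum_cycleType]
    simpa using x.support.card_le_univ
  rw [Perm.sign_of_cycleType] at hs
  rw [ht] at hs hsum hparts ⊢
  rcases t.empty_or_exists_mem with rfl | ⟨n, hn⟩
  · -- a single 4-cycle is odd
    revert hs; decide
  · obtain ⟨s, rfl⟩ := Multiset.exists_cons_of_mem hn
    have hn' := hparts n (by simp)
    simp only [Multiset.sum_cons] at hsum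
    have hn2 : n = 2 := by omega
    subst hn2
    rcases s.empty_or_exists_mem with rfl | ⟨m, hm⟩
    · rfl
    · obtain ⟨r, rfl⟩ := Multiset.exists_cons_of_mem hm
      have := hparts m (by simp)
      simp only [Multiset.sum_cons] at hsum
      omega

lemma exists_conj_eq_c (x : alternatingGroup (Fin 6)) (h4 : x ^ 4 = 1) (h2 : x ^ 2 ≠ 1) :
    ∃ g : alternatingGroup (Fin 6),
      ((g * x * g⁻¹ : alternatingGroup (Fin 6)) : Perm (Fin 6)) = c := by
  have hx : (x : Perm (Fin 6)).cycleType = {4, 2} := by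
    refine cycleType_of_order_four _ x.2 ?_ ?_
    · exact_mod_cast congrArg Subtype.val h4
    · exact fun h => h2 (Subtype.ext (by simpa using h))
  have hc : c.cycleType = {4, 2} :=
    cycleType_of_order_four c (by decide +kernel) (by decide +kernel) (by decide +kernel)
  obtain ⟨g, hg⟩ := isConj_iff.mp (Perm.isConj_iff_cycleType_eq.mpr (hx.trans hc.symm))
  rcases Int.units_eq_one_or (Perm.sign g) with h | h
  · exact ⟨⟨g, h⟩, hg⟩
  · -- correct the parity of `g` by the odd permutation `(4 5)`, which commutes with `c`
    have hodd : Perm.sign (swap 4 5 * g) = 1 := by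
      rw [map_mul, h, Perm.sign_swap (by decide)]; rfl
    refine ⟨⟨swap 4 5 * g, hodd⟩, ?_⟩
    calc swap 4 5 * g * (x : Perm (Fin 6)) * (swap 4 5 * g)⁻¹
        = swap 4 5 * (g * (x : Perm (Fin 6)) * g⁻¹) * (swap 4 5)⁻¹ := by group
      _ = c := by rw [hg]; decide +kernel

/-! ### Classification -/

/-- The finite check: together with `c`, an involution `y` satisfying the relations of `S₄` lies in
one of the two standard copies. -/
lemma mem_range_of_relations : ∀ y : Perm (Fin 6), y * y = 1 → c * y * (c * y) * (c * y) = 1 →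
    (∃ σ, natPermHom σ = y) ∨ ∃ σ, pairPermHom σ = y := by
  decide +kernel

lemma range_eq_of_generators {G : Type*} [Group G] (f ψ : Perm (Fin 4) →* G)
    (hf : Function.Injective f) (hψ : Function.Injective ψ)
    (h1 : ψ (finRotate 4) ∈ f.range) (h2 : ψ (swap 0 1) ∈ f.range) : f.range = ψ.range := by
  have hle : ψ.range ≤ f.range := by
    have htop : f.range.comap ψ = ⊤ := by
      rw [eq_top_iff, ← Perm.closure_cycle_adjacent_swap (isCycle_finRotate (n := 2))
        support_finRotate (0 : Fin 4), Subgroup.closure_le]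
      rintro _ (rfl | rfl)
      · exact h1
      · exact h2
    rintro _ ⟨σ, rfl⟩
    exact Subgroup.mem_comap.mp (htop ▸ Subgroup.mem_top σ)
  have : Finite f.range := Finite.of_equiv _ (f.ofInjective hf).toEquiv
  refine (Subgroup.eq_of_le_of_card_ge hle (le_of_eq ?_)).symm
  rw [← Nat.card_congr (f.ofInjective hf).toEquiv, ← Nat.card_congr (ψ.ofInjective hψ).toEquiv]

lemma range_eq_of_map_finRotate (ψ : Perm (Fin 4) →* alternatingGroup (Fin 6))
    (hψ : Function.Injective ψ) (hc : (ψ (finRotate 4) : Perm (Fin 6)) = c) :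
    natHom.range = ψ.range ∨ pairHom.range = ψ.range := by
  have hy : ((ψ (swap 0 1)) : Perm (Fin 6)) * ψ (swap 0 1) = 1 := by
    have : ψ (swap 0 1) * ψ (swap 0 1) = 1 := by
      rw [← map_mul, swap_mul_self, map_one]
    exact congrArg Subtype.val this
  have hcy : c * ψ (swap 0 1) * (c * ψ (swap 0 1)) * (c * ψ (swap 0 1)) = 1 := by
    have h : (finRotate 4 * swap 0 1) * (finRotate 4 * swap 0 1) * (finRotate 4 * swap 0 1) = 1 := by
      decide
    have := congrArg (fun σ => (ψ σ : Perm (Fin 6))) h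
    simpa only [map_mul, map_one, Subgroup.coe_mul, Subgroup.coe_one, hc] using this
  rcases mem_range_of_relations _ hy hcy with ⟨σ, hσ⟩ | ⟨σ, hσ⟩
  · exact .inl (range_eq_of_generators _ _ natHom_injective hψ
      ⟨finRotate 4, Subtype.ext (natHom_finRotate.trans hc.symm)⟩ ⟨σ, Subtype.ext hσ⟩)
  · exact .inr (range_eq_of_generators _ _ pairHom_injective hψ
      ⟨finRotate 4, Subtype.ext (pairHom_finRotate.trans hc.symm)⟩ ⟨σ, Subtype.ext hσ⟩)

lemma subgroupsConj_symm {G : Type*} [Group G] {H K : Subgroup G} (h : SubgroupsConj H K) :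
    SubgroupsConj K H := by
  obtain ⟨g, rfl⟩ := h
  refine ⟨g⁻¹, ?_⟩
  rw [Subgroup.map_map]
  convert Subgroup.map_id H
  ext x
  simp [mul_assoc]

/-- The image of `(0 1 2)` under `natHom` is a 3-cycle, whereas no element of the image of `pairHom`
moves exactly three points. -/
lemma not_subgroupsConj : ¬ SubgroupsConj natHom.range pairHom.range := by
  rintro ⟨g, hg⟩
  have hmem : g * natHom (swap 0 1 * swap 1 2) * g⁻¹ ∈ pairHom.range := by
    rw [← hg]
    exact ⟨_, ⟨_, rfl⟩, rfl⟩
  obtain ⟨σ, hσ⟩ := hmem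
  have h3 : (natPermHom (swap 0 1 * swap 1 2)).support.card = 3 := by decide +kernel
  have hno : ∀ τ, (pairPermHom τ).support.card ≠ 3 := by decide +kernel
  apply hno σ
  have hσ' : pairPermHom σ = g * natPermHom (swap 0 1 * swap 1 2) * (g : Perm (Fin 6))⁻¹ :=
    congrArg Subtype.val hσ
  rw [hσ', Perm.card_support_conj, h3]

/-- The subgroups of `A₆` isomorphic to `S₄` form exactly two orbits under the
conjugation action of `A₆`. -/
theorem a6_two_classes_of_s4_subgroups :
    ∃ H K : Subgroup (alternatingGroup (Fin 6)),
      Nonempty (H ≃* Equiv.Perm (Fin 4)) ∧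
      Nonempty (K ≃* Equiv.Perm (Fin 4)) ∧
      ¬ SubgroupsConj H K ∧
      ∀ L : Subgroup (alternatingGroup (Fin 6)),
        Nonempty (L ≃* Equiv.Perm (Fin 4)) →
        (SubgroupsConj H L ∨ SubgroupsConj K L) := by
  refine ⟨natHom.range, pairHom.range, ⟨(natHom.ofInjective natHom_injective).symm⟩,
    ⟨(pairHom.ofInjective pairHom_injective).symm⟩, not_subgroupsConj, ?_⟩
  rintro L ⟨φ⟩
  let ι : Perm (Fin 4) →* alternatingGroup (Fin 6) := L.subtype.comp φ.symm.toMonoidHom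
  have hι : Function.Injective ι := L.subtype_injective.comp φ.symm.injective
  have hιrange : ι.range = L := by
    rw [MonoidHom.range_comp, MonoidHom.range_eq_top.mpr φ.symm.surjective,
      ← MonoidHom.range_eq_map, Subgroup.range_subtype]
  obtain ⟨g, hg⟩ := exists_conj_eq_c (ι (finRotate 4))
    (by rw [← map_pow, show (finRotate 4) ^ 4 = 1 by decide, map_one])
    (by
      rw [← map_pow, Ne, map_eq_one_iff ι hι]
      decide)
  have hrange : ((MulAut.conj g).toMonoidHom.comp ι).range =
      L.map (MulAut.conj g).toMonoidHom := by
    rw [MonoidHom.range_comp, hιrange]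
  refine (range_eq_of_map_finRotate ((MulAut.conj g).toMonoidHom.comp ι)
    ((MulAut.conj g).injective.comp hι) hg).imp ?_ ?_ <;>
  · intro h
    exact subgroupsConj_symm ⟨g, (h.trans hrange).symm⟩
end

section
/- For every element t of order 2 in the alternating group A_6, there are exactly two subgroups S of A_6 isomorphic to the symmetric group S_4 such that t lies in the commutator (derived) subgroup of S. -/
/-!
Let `t` be an involution of `A₆`. If `S ≅ S₄` and `t ∈ [S, S] ≅ A₄`, then `t` lies in the normal
Klein four-group `V` of `S`, so `S` normalizes a Klein four-group containing `t`
(`exists_klein_of_sign_eq_one`). Involutions of `A₆` have cycle type `2²` and are therefore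
conjugate in `S₆`, which acts on `A₆` by automorphisms, so one may take `t = (0 1)(2 3)`. The
centralizer of `t` in `A₆` is dihedral of order 8, so `t` lies in exactly two Klein four-groups,
`⟨t, (0 2)(1 3)⟩` and `⟨t, (0 1)(4 5)⟩` (`eq_of_commute`). The normalizer of each is a copy of
`S₄`: the first is `S₄` acting on `{0, 1, 2, 3}`, corrected on `{4, 5}` by its sign
(`signEmb`); the second is `S₄` acting on the six edges of a tetrahedron (`edgeEmb`). Comparing
orders, `S` is one of these two normalizers, and both contain `t` as a commutator.
-/

namespace A6S4

open Equiv Equiv.Perm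
open scoped commutatorElement

/-! ### Two embeddings of `S₄` in `A₆` -/

/-- The sign of a permutation, as a permutation of two points. -/
def signPerm : Perm (Fin 4) →* Perm (Fin 2) where
  toFun σ := if sign σ = 1 then 1 else swap 0 1
  map_one' := by simp
  map_mul' σ τ := by
    rcases Int.units_eq_one_or (sign σ) with h | h <;>
      rcases Int.units_eq_one_or (sign τ) with h' | h' <;> simp [h, h']

lemma sign_signPerm (σ : Perm (Fin 4)) : sign (signPerm σ) = sign σ := by
  rcases Int.units_eq_one_or (sign σ) with h | h <;> simp [signPerm, h]

/-- `S₄` acting naturally on `{0, 1, 2, 3}` and through the sign on `{4, 5}`. -/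
def signHom : Perm (Fin 4) →* Perm (Fin 6) :=
  (finSumFinEquiv (m := 4) (n := 2)).permCongrHom.toMonoidHom.comp
    ((sumCongrHom (Fin 4) (Fin 2)).comp ((MonoidHom.id _).prod signPerm))

lemma signHom_mem (σ : Perm (Fin 4)) : signHom σ ∈ alternatingGroup (Fin 6) := by
  have h : sign (signHom σ) = sign σ * sign (signPerm σ) := by
    simp [signHom, Equiv.permCongrHom]
  rw [mem_alternatingGroup, h, sign_signPerm, Int.units_mul_self]

/-- The copy of `S₄` in `A₆` with orbits `{0, 1, 2, 3}` and `{4, 5}`. -/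
def signEmb : Perm (Fin 4) →* alternatingGroup (Fin 6) := signHom.codRestrict _ signHom_mem

/-- First endpoint of an edge of the tetrahedron. Opposite edges are numbered `2k`, `2k + 1`. -/
def src : Fin 6 → Fin 4 := ![0, 1, 0, 1, 0, 2]

/-- Second endpoint of an edge of the tetrahedron. -/
def tgt : Fin 6 → Fin 4 := ![2, 3, 3, 2, 1, 3]

/-- The edge with given endpoints; the diagonal values are irrelevant. -/
def edge : Fin 4 → Fin 4 → Fin 6 :=
  ![![0, 4, 0, 2], ![4, 0, 3, 1], ![0, 3, 0, 5], ![2, 1, 5, 0]]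

lemma edge_src_tgt : ∀ i, edge (src i) (tgt i) = i := by decide

lemma src_ne_tgt : ∀ i, src i ≠ tgt i := by decide

lemma edge_comm : ∀ x y, edge x y = edge y x := by decide

lemma ends_edge : ∀ x y, x ≠ y → (src (edge x y) = x ∧ tgt (edge x y) = y) ∨
    (src (edge x y) = y ∧ tgt (edge x y) = x) := by decide

/-- `S₄` acting on the six edges of the tetrahedron. -/
def edgeHom : Perm (Fin 4) →* Perm (Fin 6) :=
  MonoidHom.toHomPerm
    { toFun := fun σ i => edge (σ (src i)) (σ (tgt i))
      map_one' := funext edge_src_tgt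
      map_mul' := fun σ τ => funext fun i => by
        change _ = edge (σ (src (edge _ _))) (σ (tgt (edge _ _)))
        rcases ends_edge (τ (src i)) (τ (tgt i)) (τ.injective.ne (src_ne_tgt i)) with
          ⟨h, h'⟩ | ⟨h, h'⟩
        · rw [h, h']; rfl
        · rw [h, h', edge_comm]; rfl }

lemma edgeHom_mem : ∀ σ : Perm (Fin 4), edgeHom σ ∈ alternatingGroup (Fin 6) := by
  simp only [mem_alternatingGroup]
  decide +kernel

/-- The transitive copy of `S₄` in `A₆` given by the edges of the tetrahedron. -/
def edgeEmb : Perm (Fin 4) →* alternatingGroup (Fin 6) := edgeHom.codRestrict _ edgeHom_mem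

lemma signEmb_injective : Function.Injective signEmb := by
  rw [injective_iff_map_eq_one]
  intro σ h
  have h' : signHom σ = 1 := congrArg Subtype.val h
  revert σ
  decide +kernel

lemma edgeEmb_injective : Function.Injective edgeEmb := by
  rw [injective_iff_map_eq_one]
  intro σ h
  have h' : edgeHom σ = 1 := congrArg Subtype.val h
  revert σ
  decide +kernel

/-! ### Klein four-groups containing a given involution -/

/-- The involution `(0 1)(2 3)`. -/
def t₀ : Perm (Fin 6) := swap 0 1 * swap 2 3

/-- `g` conjugates both generators `x`, `y` of a Klein four-group `{1, x, y, x * y}` to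
nontrivial elements of that group. -/
def Normalizes {G : Type*} [Group G] (x y g : G) : Prop :=
  (g * x = x * g ∨ g * x = y * g ∨ g * x = x * y * g) ∧
    (g * y = x * g ∨ g * y = y * g ∨ g * y = x * y * g)

instance {G : Type*} [Group G] [DecidableEq G] (x y g : G) : Decidable (Normalizes x y g) :=
  inferInstanceAs (Decidable (_ ∧ _))

lemma Normalizes.map {G H : Type*} [Group G] [Group H] (f : G →* H) {x y g : G}
    (h : Normalizes x y g) : Normalizes (f x) (f y) (f g) := by
  simp only [Normalizes, ← map_mul]
  exact ⟨h.1.imp (congrArg f) (Or.imp (congrArg f) (congrArg f)),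
    h.2.imp (congrArg f) (Or.imp (congrArg f) (congrArg f))⟩

/-- Every involution of `A₄` lies in a Klein four-group normalized by `S₄`. -/
lemma exists_klein_of_sign_eq_one : ∀ x : Perm (Fin 4), x * x = 1 → x ≠ 1 → sign x = 1 →
    ∃ y : Perm (Fin 4), y * y = 1 ∧ y ≠ 1 ∧ y ≠ x ∧ x * y = y * x ∧ ∀ g, Normalizes x y g := by
  decide +kernel

/-- The involutions `u ≠ t₀` of `A₆` commuting with `t₀`; the first two generate the same
Klein four-group with `t₀`, as do the last two. -/
lemma eq_of_commute : ∀ u : Perm (Fin 6), t₀ * u = u * t₀ → u * u = 1 → u ≠ 1 → u ≠ t₀ →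
    sign u = 1 → (u = swap 0 2 * swap 1 3 ∨ u = swap 0 3 * swap 1 2) ∨
      (u = swap 0 1 * swap 4 5 ∨ u = swap 2 3 * swap 4 5) := by
  decide +kernel

lemma normalizer_sign : ∀ g : Perm (Fin 6),
    (Normalizes t₀ (swap 0 2 * swap 1 3) g ∨ Normalizes t₀ (swap 0 3 * swap 1 2) g) →
    sign g = 1 → ∃ σ, signHom σ = g := by
  decide +kernel

lemma normalizer_edge : ∀ g : Perm (Fin 6),
    (Normalizes t₀ (swap 0 1 * swap 4 5) g ∨ Normalizes t₀ (swap 2 3 * swap 4 5) g) →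
    sign g = 1 → ∃ σ, edgeHom σ = g := by
  decide +kernel

/-! ### Classification for `(0 1)(2 3)` and transport to all involutions -/

/-- The commutator subgroup of a copy `S` of `S₄` consists of elements of sign `1`. -/
lemma sign_eq_one_of_mem_commutator {G : Type*} [Group G] {S : Subgroup G}
    (e : S ≃* Perm (Fin 4)) {t : G} (ht : t ∈ ⁅S, S⁆) :
    ∃ s : S, (s : G) = t ∧ sign (e s) = 1 := by
  have h : ⁅S, S⁆ ≤ (sign.comp e.toMonoidHom).ker.map S.subtype := by
    rw [Subgroup.commutator_le]
    intro a ha b hb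
    refine ⟨⁅(⟨a, ha⟩ : S), ⟨b, hb⟩⁆, ?_, rfl⟩
    rw [SetLike.mem_coe, MonoidHom.mem_ker, map_commutatorElement,
      commutatorElement_eq_one_iff_mul_comm, mul_comm]
  obtain ⟨s, hs, rfl⟩ := h ht
  exact ⟨s, rfl, hs⟩

lemma t₀_mem : t₀ ∈ alternatingGroup (Fin 6) := by
  rw [mem_alternatingGroup]; decide

/-- The set of subgroups counted by the theorem. -/
def derivedS4 (t : alternatingGroup (Fin 6)) : Set (Subgroup (alternatingGroup (Fin 6))) :=
  {S | Nonempty (S ≃* Perm (Fin 4)) ∧ t ∈ ⁅S, S⁆}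

lemma range_mem_derivedS4 {f : Perm (Fin 4) →* alternatingGroup (Fin 6)}
    (hf : Function.Injective f) {t : alternatingGroup (Fin 6)} (a b : Perm (Fin 4))
    (h : f ⁅a, b⁆ = t) : f.range ∈ derivedS4 t := by
  refine ⟨⟨(f.ofInjective hf).symm⟩, ?_⟩
  rw [← h, map_commutatorElement]
  exact Subgroup.commutator_mem_commutator ⟨a, rfl⟩ ⟨b, rfl⟩

/-- Two copies of `S₄`, one contained in the other, coincide because they have the same order. -/
lemma eq_range_of_le {f : Perm (Fin 4) →* alternatingGroup (Fin 6)}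
    (hf : Function.Injective f) {S : Subgroup (alternatingGroup (Fin 6))}
    (e : S ≃* Perm (Fin 4)) (h : S ≤ f.range) : S = f.range := by
  refine Subgroup.eq_of_le_of_card_ge h (le_of_eq ?_)
  rw [Nat.card_congr e.toEquiv, Nat.card_congr (f.ofInjective hf).symm.toEquiv]

lemma derivedS4_t₀ : derivedS4 ⟨t₀, t₀_mem⟩ = {signEmb.range, edgeEmb.range} := by
  apply Set.Subset.antisymm
  · rintro S ⟨⟨e⟩, ht⟩
    obtain ⟨s, hs, hsign⟩ := sign_eq_one_of_mem_commutator e ht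
    let f : Perm (Fin 4) →* Perm (Fin 6) :=
      ((alternatingGroup (Fin 6)).subtype.comp S.subtype).comp e.symm.toMonoidHom
    have hf : Function.Injective f :=
      (Subtype.val_injective.comp Subtype.val_injective).comp e.symm.injective
    have hfe : ∀ r : S, f (e r) = ((r : alternatingGroup (Fin 6)) : Perm (Fin 6)) :=
      fun r => congrArg (fun r : S => ((r : alternatingGroup (Fin 6)) : Perm (Fin 6)))
        (e.symm_apply_apply r)
    have hft : f (e s) = t₀ := by rw [hfe, hs]
    have hmem : ∀ x, sign (f x) = 1 := fun x =>
      mem_alternatingGroup.1 (e.symm x : alternatingGroup (Fin 6)).2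
    obtain ⟨y, hy, hy1, hyx, hxy, hN⟩ := exists_klein_of_sign_eq_one (e s)
      (hf (by rw [map_mul, map_one, hft]; decide))
      (fun h => absurd (hft.symm.trans (by rw [h, map_one])) (by decide)) hsign
    have hN' : ∀ g ∈ S, Normalizes t₀ (f y) g := fun g hg => by
      have := (hN (e ⟨g, hg⟩)).map f
      rwa [hft, hfe] at this
    rcases eq_of_commute (f y) (by rw [← hft, ← map_mul, hxy, map_mul])
      (by rw [← map_mul, hy, map_one]) (fun h => hy1 (hf (h.trans f.map_one.symm)))
      (fun h => hyx (hf (h.trans hft.symm))) (hmem y) with hu | hu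
    · left
      refine eq_range_of_le signEmb_injective e fun g hg => ?_
      obtain ⟨σ, hσ⟩ := normalizer_sign g
        (by rcases hu with h | h <;> rw [h] at hN'; exacts [.inl (hN' g hg), .inr (hN' g hg)])
        (mem_alternatingGroup.1 g.2)
      exact ⟨σ, Subtype.ext hσ⟩
    · right
      refine eq_range_of_le edgeEmb_injective e fun g hg => ?_
      obtain ⟨σ, hσ⟩ := normalizer_edge g
        (by rcases hu with h | h <;> rw [h] at hN'; exacts [.inl (hN' g hg), .inr (hN' g hg)])
        (mem_alternatingGroup.1 g.2)
      exact ⟨σ, Subtype.ext hσ⟩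
  · -- In `S₄`, the commutator of `(0 1)(1 2)` and `(0 1)(1 3)` is `(0 1)(2 3)`.
    rintro S (rfl | rfl)
    · exact range_mem_derivedS4 signEmb_injective (swap 0 1 * swap 1 2) (swap 0 1 * swap 1 3)
        (Subtype.ext (by decide +kernel : signHom _ = t₀))
    · exact range_mem_derivedS4 edgeEmb_injective (swap 0 1 * swap 1 2) (swap 0 1 * swap 1 3)
        (Subtype.ext (by decide +kernel : edgeHom _ = t₀))

/-- The first group preserves `{4, 5}`, whereas the second is transitive. -/
lemma range_ne : signEmb.range ≠ edgeEmb.range := by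
  intro h
  have hmem : edgeEmb (swap 0 1 * swap 1 2) ∈ signEmb.range := h ▸ ⟨_, rfl⟩
  obtain ⟨σ, hσ⟩ := hmem
  have hσ' : signHom σ = edgeHom (swap 0 1 * swap 1 2) := congrArg Subtype.val hσ
  revert σ
  decide +kernel

/-- An even involution on six points has cycle type `2²`, hence is conjugate to `t₀` in `S₆`. -/
lemma exists_conj (t : alternatingGroup (Fin 6)) (ht : orderOf t = 2) :
    ∃ h : Perm (Fin 6), h * t₀ * h⁻¹ = t := by
  have ht' : orderOf (t : Perm (Fin 6)) = 2 := by rw [Subgroup.orderOf_coe, ht]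
  obtain ⟨n, hn⟩ := cycleType_prime_order (by rw [ht']; exact Nat.prime_two)
  rw [ht'] at hn
  have hle : (t : Perm (Fin 6)).cycleType.sum ≤ 6 := by
    rw [sum_cycleType]; exact Finset.card_le_univ _
  have hsign := mem_alternatingGroup.1 t.2
  rw [sign_of_cycleType, hn] at hsign
  rw [hn] at hle
  simp only [Multiset.sum_replicate, Multiset.card_replicate, smul_eq_mul] at hle hsign
  have hn1 : n = 1 := by
    have : n ≤ 2 := by omega
    interval_cases n
    · exact absurd hsign (by decide)
    · rfl
    · exact absurd hsign (by decide)
  rw [← isConj_iff, isConj_iff_cycleType_eq, hn, hn1]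
  decide +kernel

/-- An automorphism of `A₆` carries the subgroups counted at `t` into those counted at its
image. -/
lemma map_mem_derivedS4 (c : MulAut (alternatingGroup (Fin 6))) {t : alternatingGroup (Fin 6)}
    {S : Subgroup (alternatingGroup (Fin 6))} (hS : S ∈ derivedS4 t) :
    S.map c.toMonoidHom ∈ derivedS4 (c t) := by
  obtain ⟨⟨e⟩, ht⟩ := hS
  refine ⟨⟨(S.equivMapOfInjective _ c.injective).symm.trans e⟩, ?_⟩
  rw [← Subgroup.map_commutator]
  exact ⟨t, ht, rfl⟩

lemma derivedS4_map (c : MulAut (alternatingGroup (Fin 6))) (t : alternatingGroup (Fin 6)) :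
    derivedS4 (c t) = Subgroup.map c.toMonoidHom '' derivedS4 t := by
  apply Set.Subset.antisymm
  · intro S hS
    refine ⟨S.map (c⁻¹ : MulAut _).toMonoidHom, ?_, ?_⟩
    · simpa using map_mem_derivedS4 c⁻¹ hS
    · rw [Subgroup.map_map]
      convert S.map_id
      exact MonoidHom.ext c.apply_symm_apply
  · rintro _ ⟨S, hS, rfl⟩
    exact map_mem_derivedS4 c hS

end A6S4

/-- For every element `t` of order 2 in `A₆`, there are exactly two subgroups
`S` of `A₆` isomorphic to `S₄` such that `t` lies in the commutator subgroup
of `S`. -/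
theorem a6_involution_in_two_s4_derived_subgroups
    (t : alternatingGroup (Fin 6)) (ht : orderOf t = 2) :
    {S : Subgroup (alternatingGroup (Fin 6)) |
      Nonempty (S ≃* Equiv.Perm (Fin 4)) ∧ t ∈ ⁅S, S⁆}.ncard = 2 := by
  obtain ⟨h, hh⟩ := A6S4.exists_conj t ht
  have hc : MulAut.conjNormal h ⟨A6S4.t₀, A6S4.t₀_mem⟩ = t :=
    Subtype.ext ((MulAut.conjNormal_apply _ _).trans hh)
  change (A6S4.derivedS4 t).ncard = 2
  rw [← hc, A6S4.derivedS4_map, Set.ncard_image_of_injective _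
    (Subgroup.map_injective (MulEquiv.injective _)), A6S4.derivedS4_t₀,
    Set.ncard_pair A6S4.range_ne]
end

section
/- If S is a subgroup of the alternating group A_6 isomorphic to the symmetric group S_4, then there are exactly two subgroups of A_6 isomorphic to the alternating group A_5 that contain the commutator (derived) subgroup of S. -/
/-!
The proof is mostly orbit counting in `A₆`, with one finite check on permutations of six points.

*Subgroups isomorphic to `A₅` are the subgroups of order 60* (`equiv_A5_iff`). If `L` has order 60,
then `A₆` acts on the six cosets of `L`, faithfully since `A₆` is simple, and its image has index
two in `S₆`, hence is `A₆` again. This gives an automorphism of `A₆` carrying `L` to a point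
stabilizer (`exists_aut`).

*Counting above one known subgroup* (`ncard_eq_two`). Let `D` have order 12 and be contained in some
subgroup of order 60; by the above this may be taken to be the stabilizer of `5`. As no three points
have a pointwise stabilizer in `A₆` of order greater than 3, `D` must fix exactly one further point
`p`. If `L ≥ D` has order 60, the stabilizer of `5` in `L` has order divisible by 12, so the
`L`-orbit of `5` has length 1 or 5. In the first case `L` is the stabilizer of `5`; in the second
`L` fixes the sixth point, which is also fixed by `D` and therefore is `p`.

*Existence* (`exists_over`). The derived subgroup `D` of `S ≅ S₄` is isomorphic to `A₄`, so it is
generated by an involution `x` and an element `y` with `y³ = (xy)³ = 1`. After conjugation in `S₆`,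
`x = (0 1)(2 3)`, and running through all `y` shows that `D` either fixes the point `5` or preserves
the icosahedral structure on six points, whose stabilizer in `A₆` has order 60
(`classify_order_three`, `card_icosahedral_of_le`).
-/

open MulAction Equiv

local notation "A₆" => alternatingGroup (Fin 6)

/-! ### Subgroups of order 60 are the subgroups isomorphic to `A₅` -/

theorem card_A6 : Nat.card A₆ = 360 := by
  rw [nat_card_alternatingGroup, Nat.card_eq_fintype_card, Fintype.card_fin]; rfl

/-- Simplicity of `A₆`: the kernel of the action on cosets is the normal core of `L`. -/
theorem toPermHom_injective {L : Subgroup A₆} (hL : L ≠ ⊤) :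
    Function.Injective (toPermHom A₆ (A₆ ⧸ L)) := by
  have : IsSimpleGroup A₆ := alternatingGroup.isSimpleGroup (by simp)
  rw [← MonoidHom.ker_eq_bot_iff, ← Subgroup.normalCore_eq_ker]
  refine (Subgroup.Normal.eq_bot_or_eq_top (Subgroup.normalCore_normal L)).resolve_right fun h => ?_
  exact hL (top_le_iff.1 (h ▸ L.normalCore_le))

theorem le_index_factorial {L : Subgroup A₆} (hL : L ≠ ⊤) : 360 ≤ L.index.factorial := by
  have h := Nat.card_le_card_of_injective _ (toPermHom_injective hL)
  rwa [card_A6, Nat.card_perm] at h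

/-- The action on the six cosets of `L`, numbered so that the coset `L` itself becomes `5`, is an
automorphism of `A₆`. -/
theorem exists_aut {L : Subgroup A₆} (hL : Nat.card L = 60) :
    ∃ φ : A₆ ≃* A₆, (stabilizer A₆ (5 : Fin 6)).comap φ.toMonoidHom = L := by
  have hind : L.index = 6 := by
    have := L.card_mul_index
    rw [hL, card_A6] at this
    omega
  have htop : L ≠ ⊤ := by
    rintro rfl
    simp at hind
  have e₀ : (A₆ ⧸ L) ≃ Fin 6 := Finite.equivFinOfCardEq hind
  let e : (A₆ ⧸ L) ≃ Fin 6 := e₀.trans (swap (e₀ (QuotientGroup.mk 1)) 5)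
  have he : e (QuotientGroup.mk 1) = 5 := by simp [e]
  let f : A₆ →* Perm (Fin 6) := e.permCongrHom.toMonoidHom.comp (toPermHom A₆ (A₆ ⧸ L))
  have hf : Function.Injective f := e.permCongrHom.injective.comp (toPermHom_injective htop)
  have hr : f.range = A₆ := by
    apply Equiv.Perm.eq_alternatingGroup_of_index_eq_two
    have h1 := f.range.card_mul_index
    have h2 : Nat.card f.range = 360 := by
      rw [← card_A6]; exact (Nat.card_congr (MonoidHom.ofInjective hf).toEquiv).symm
    have h3 : Nat.card (Perm (Fin 6)) = 720 := by
      rw [Nat.card_perm, Nat.card_eq_fintype_card, Fintype.card_fin]; rfl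
    rw [h2, h3] at h1
    omega
  refine ⟨(MonoidHom.ofInjective hf).trans (MulEquiv.subgroupCongr hr), ?_⟩
  ext g
  rw [Subgroup.mem_comap, mem_stabilizer_iff]
  change f g 5 = 5 ↔ _
  have : f g 5 = e (QuotientGroup.mk g) := by
    change e (g • e.symm 5) = _
    rw [← he, e.symm_apply_apply]
    change e (QuotientGroup.mk (g * 1)) = _
    rw [mul_one]
  rw [this, ← he, e.apply_eq_iff_eq, eq_comm, QuotientGroup.eq]
  simp

theorem card_stabilizer (p : Fin 6) : Nat.card (stabilizer A₆ p) = 60 := by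
  have := alternatingGroup.isPretransitive_of_three_le_card (Fin 6) (by simp)
  have h := (stabilizer A₆ p).card_mul_index
  rw [index_stabilizer_of_transitive, card_A6, Nat.card_eq_fintype_card (α := Fin 6),
    Fintype.card_fin] at h
  omega

theorem card_A5 : Nat.card (alternatingGroup (Fin 5)) = 60 := by
  rw [nat_card_alternatingGroup, Nat.card_eq_fintype_card, Fintype.card_fin]; rfl

theorem stabilizer_equiv : Nonempty (stabilizer A₆ (5 : Fin 6) ≃* alternatingGroup (Fin 5)) := by
  let E := Equiv.altCongrHom (finSuccAboveEquiv (5 : Fin 6))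
  let g : alternatingGroup {x : Fin 6 // x ≠ 5} →* A₆ :=
    ((Perm.ofSubtype).comp (Subgroup.subtype _)).codRestrict A₆ fun σ => by
      rw [Perm.mem_alternatingGroup]
      change Perm.sign (Perm.ofSubtype σ.1) = 1
      rw [Perm.sign_ofSubtype]
      exact σ.2
  have hg : Function.Injective g := fun a b h =>
    Subtype.ext (Perm.ofSubtype_injective (congrArg Subtype.val h))
  have hr : g.range = stabilizer A₆ (5 : Fin 6) := by
    refine Subgroup.eq_of_le_of_card_ge ?_ ?_
    · rintro _ ⟨σ, rfl⟩
      exact Perm.ofSubtype_apply_of_not_mem σ.1 (by simp)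
    · rw [card_stabilizer, ← card_A5]
      exact (Nat.card_congr (E.trans (MonoidHom.ofInjective hg)).toEquiv).le
  exact ⟨((E.trans (MonoidHom.ofInjective hg)).trans (MulEquiv.subgroupCongr hr)).symm⟩

theorem equiv_A5_iff (L : Subgroup A₆) :
    Nonempty (L ≃* alternatingGroup (Fin 5)) ↔ Nat.card L = 60 := by
  refine ⟨fun ⟨e⟩ => (Nat.card_congr e.toEquiv).trans card_A5, fun h => ?_⟩
  obtain ⟨φ, rfl⟩ := exists_aut h
  obtain ⟨e⟩ := stabilizer_equiv
  exact ⟨((φ.subgroupMap _).trans (MulEquiv.subgroupCongr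
    (Subgroup.map_comap_eq_self_of_surjective φ.surjective _))).trans e⟩

/-! ### Counting subgroups of order 60 above a subgroup of order 12 -/

/-- A group of even permutations of six points with three common fixed points has order at most 3:
its elements are determined by the image of a fourth point, for which three values are left. -/
theorem card_le_three {K : Type} [Group K] (f : K →* A₆) (hf : Function.Injective f)
    {p q r : Fin 6} (hpq : p ≠ q) (hpr : p ≠ r) (hqr : q ≠ r)
    (hp : ∀ k, (f k).1 p = p) (hq : ∀ k, (f k).1 q = q) (hr : ∀ k, (f k).1 r = r) :
    Nat.card K ≤ 3 := by
  have hcard : ({p, q, r} : Finset (Fin 6)).card = 3 := by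
    rw [Finset.card_eq_three]; exact ⟨p, q, r, hpq, hpr, hqr, rfl⟩
  have hcc : ({p, q, r} : Finset (Fin 6))ᶜ.card = 3 := by
    rw [Finset.card_compl, hcard]; rfl
  obtain ⟨s, hs⟩ : ({p, q, r} : Finset (Fin 6))ᶜ.Nonempty := by
    rw [← Finset.card_pos]; omega
  have hsc := hs
  simp only [Finset.mem_compl, Finset.mem_insert, Finset.mem_singleton, not_or] at hsc
  -- an even permutation with four fixed points is trivial
  have key : ∀ k : K, (f k).1 s = s → k = 1 := by
    intro k hk
    have hsub : (f k).1.support ⊆ ({s, p, q, r} : Finset (Fin 6))ᶜ := by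
      intro i hi
      rw [Perm.mem_support] at hi
      simp only [Finset.mem_compl, Finset.mem_insert, Finset.mem_singleton, not_or]
      refine ⟨?_, ?_, ?_, ?_⟩ <;> rintro rfl <;> simp_all
    have h4 : ({s, p, q, r} : Finset (Fin 6))ᶜ.card = 2 := by
      rw [Finset.card_compl, Finset.card_insert_of_notMem (by simpa using hsc), hcard]; rfl
    have hle := Finset.card_le_card hsub
    rw [h4] at hle
    by_contra hne
    have hne' : (f k).1 ≠ 1 := fun h => hne (hf (by rw [map_one]; exact Subtype.ext h))
    have h2 := Perm.two_le_card_support_of_ne_one hne'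
    have hsw := Perm.card_support_eq_two.1 (le_antisymm hle h2)
    have h1 : Perm.sign (f k).1 = 1 := (f k).2
    rw [hsw.sign_eq] at h1
    exact absurd h1 (by decide)
  have hmem : ∀ k : K, (f k).1 s ∈ ({p, q, r} : Finset (Fin 6))ᶜ := by
    intro k
    simp only [Finset.mem_compl, Finset.mem_insert, Finset.mem_singleton, not_or]
    refine ⟨fun h => hsc.1 ?_, fun h => hsc.2.1 ?_, fun h => hsc.2.2 ?_⟩
    · exact (f k).1.injective (h.trans (hp k).symm)
    · exact (f k).1.injective (h.trans (hq k).symm)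
    · exact (f k).1.injective (h.trans (hr k).symm)
  have hinj : Function.Injective
      (fun k : K => (⟨(f k).1 s, hmem k⟩ : (({p, q, r} : Finset (Fin 6))ᶜ : Finset (Fin 6)))) := by
    intro k l h
    have h' : (f k).1 s = (f l).1 s := congrArg Subtype.val h
    have := key (l⁻¹ * k) (by simp [h'])
    exact (inv_mul_eq_one.1 this).symm
  have := Nat.card_le_card_of_injective _ hinj
  rwa [Nat.card_eq_fintype_card (α := (({p, q, r} : Finset (Fin 6))ᶜ : Finset (Fin 6))),
    Fintype.card_coe, hcc] at this

theorem le_stabilizer_of_ncard_orbit {H : Subgroup A₆} {p : Fin 6}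
    (h : (orbit H p).ncard = 1) : H ≤ stabilizer A₆ p := by
  obtain ⟨a, ha⟩ := Set.ncard_eq_one.1 h
  have hp : p ∈ orbit H p := mem_orbit_self p
  intro g hg
  have hgp : (⟨g, hg⟩ : H) • p ∈ orbit H p := mem_orbit p _
  rw [ha, Set.mem_singleton_iff] at hp hgp
  exact hgp.trans hp.symm

/-- Since `5 ∤ 12`, the group `D` is not transitive on the five points other than `5`, so it has an
orbit of length at most 2 there. Length 2 is impossible: the stabilizer of a point of the orbit
would have order 6 and fix three points. -/
theorem exists_second_fixed_point {D : Subgroup A₆} (hD : Nat.card D = 12)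
    (h5 : D ≤ stabilizer A₆ (5 : Fin 6)) : ∃ p : Fin 6, p ≠ 5 ∧ D ≤ stabilizer A₆ p := by
  have hcard : ∀ r : Fin 6, Nat.card (stabilizer D r) * (orbit D r).ncard = 12 := fun r => by
    rw [← index_stabilizer, Subgroup.card_mul_index, hD]
  have hfive : ∀ d : D, d • (5 : Fin 6) = 5 := fun d => h5 d.2
  have hne5 : ∀ r : Fin 6, r ≠ 5 → 5 ∉ orbit D r := by
    rintro r hr ⟨d, hd⟩
    apply hr
    have hd' : d • r = 5 := hd
    rw [← hfive d, smul_left_cancel_iff] at hd'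
    exact hd'
  have small : ∀ r : Fin 6, r ≠ 5 → (orbit D r).ncard ≤ 2 → D ≤ stabilizer A₆ r := by
    intro r hr h2
    apply le_stabilizer_of_ncard_orbit
    have hpos : 0 < (orbit D r).ncard := (Set.ncard_pos).2 ⟨r, mem_orbit_self r⟩
    by_contra hne
    have h2' : (orbit D r).ncard = 2 := by omega
    have hc := hcard r
    rw [h2'] at hc
    obtain ⟨q, hq, hqr⟩ := Set.exists_ne_of_one_lt_ncard (by omega : 1 < (orbit D r).ncard) r
    have horb : {r, q} = orbit D r := by
      refine Set.eq_of_subset_of_ncard_le ?_ ?_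
      · rintro i (rfl | rfl)
        exacts [mem_orbit_self _, hq]
      · rw [h2', Set.ncard_pair hqr.symm]
    have := card_le_three (D.subtype.comp (stabilizer D r).subtype)
      (D.subtype_injective.comp (Subgroup.subtype_injective _)) (p := 5) (q := r) (r := q)
      hr.symm (fun h => hne5 r hr (h ▸ hq)) hqr.symm (fun k => hfive k.1) (fun k => k.2) ?_
    · omega
    · intro k
      have hk : k.1 • q ∈ orbit D r := mem_orbit_of_mem_orbit k.1 hq
      rw [← horb] at hk
      refine hk.resolve_left fun h => hqr ?_
      have hkr : k.1 • r = r := k.2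
      exact smul_left_cancel k.1 (h.trans hkr.symm)
  by_cases h0 : (orbit D (0 : Fin 6)).ncard ≤ 2
  · exact ⟨0, by decide, small 0 (by decide) h0⟩
  have hins : (insert 5 (orbit D (0 : Fin 6))).ncard = (orbit D (0 : Fin 6)).ncard + 1 :=
    Set.ncard_insert_of_notMem (hne5 0 (by decide))
  have hadd := Set.ncard_add_ncard_compl (insert 5 (orbit D (0 : Fin 6)))
  rw [Nat.card_eq_fintype_card, Fintype.card_fin, hins] at hadd
  have h5' : (orbit D (0 : Fin 6)).ncard ≠ 5 := by
    intro h
    have h0' := hcard 0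
    rw [h] at h0'
    omega
  obtain ⟨r, hr⟩ : (insert 5 (orbit D (0 : Fin 6)))ᶜ.Nonempty := by
    rw [← Set.ncard_pos]; omega
  have hr5 : r ≠ 5 := fun h => hr (Or.inl h)
  refine ⟨r, hr5, small r hr5 ?_⟩
  have hsub : orbit D r ⊆ (insert 5 (orbit D (0 : Fin 6)))ᶜ := by
    rintro i hi (rfl | h)
    · exact hne5 r hr5 hi
    · exact hr (Or.inr ((orbit_eq_iff.2 hi).symm.trans (orbit_eq_iff.2 h) ▸ mem_orbit_self r))
  have := Set.ncard_le_ncard hsub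
  omega

/-- The orbit of `5` under `L` has length dividing `60 / 12 = 5`; if the length is 5, the remaining
point is fixed by `L`. -/
theorem eq_stabilizer_or {D L : Subgroup A₆} (hD : Nat.card D = 12) (hL : Nat.card L = 60)
    (hDL : D ≤ L) {p : Fin 6} (hp : p ≠ 5) (h5 : D ≤ stabilizer A₆ (5 : Fin 6))
    (hDp : D ≤ stabilizer A₆ p) : L = stabilizer A₆ p ∨ L = stabilizer A₆ (5 : Fin 6) := by
  have heq : ∀ q, L ≤ stabilizer A₆ q → L = stabilizer A₆ q := fun q h =>
    Subgroup.eq_of_le_of_card_ge h (by rw [card_stabilizer, hL])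
  have h12 : 12 ∣ Nat.card (stabilizer L (5 : Fin 6)) := by
    rw [← hD, ← Nat.card_congr (Subgroup.subgroupOfEquivOfLe hDL).toEquiv]
    exact Subgroup.card_dvd_of_le fun g hg => h5 hg
  obtain ⟨m, hm⟩ := h12
  have hcard : Nat.card (stabilizer L (5 : Fin 6)) * (orbit L (5 : Fin 6)).ncard = 60 := by
    rw [← index_stabilizer, Subgroup.card_mul_index, hL]
  have hdvd : (orbit L (5 : Fin 6)).ncard ∣ 5 := by
    refine ⟨m, ?_⟩
    rw [hm, mul_assoc] at hcard
    rw [mul_comm]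
    omega
  rcases (Nat.dvd_prime Nat.prime_five).1 hdvd with h | h
  · exact Or.inr (heq 5 (le_stabilizer_of_ncard_orbit h))
  · left
    have hadd := Set.ncard_add_ncard_compl (orbit L (5 : Fin 6))
    rw [Nat.card_eq_fintype_card, Fintype.card_fin, h] at hadd
    obtain ⟨q, hq⟩ := Set.ncard_eq_one.1 (by omega : (orbit L (5 : Fin 6))ᶜ.ncard = 1)
    have hqmem : q ∉ orbit L (5 : Fin 6) := by
      rw [← Set.mem_compl_iff, hq]; rfl
    have hLq : L ≤ stabilizer A₆ q := by
      intro g hg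
      have : (⟨g, hg⟩ : L) • q ∈ (orbit L (5 : Fin 6))ᶜ := fun h => hqmem <| by
        simpa only [inv_smul_smul] using mem_orbit_of_mem_orbit (⟨g, hg⟩ : L)⁻¹ h
      rw [hq] at this
      exact this
    have hqp : q = p := by
      by_contra hne
      have := card_le_three D.subtype D.subtype_injective (p := 5) (q := q) (r := p)
        (fun h => hqmem (h ▸ mem_orbit_self _)) hp.symm hne
        (fun k => h5 k.2) (fun k => hLq (hDL k.2)) (fun k => hDp k.2)
      omega
    exact hqp ▸ heq q hLq

theorem stabilizer_ne {p q : Fin 6} (h : p ≠ q) : stabilizer A₆ p ≠ stabilizer A₆ q := by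
  have key : ∀ p q : Fin 6, p ≠ q → ∃ r s : Fin 6, Perm.sign (swap q r * swap r s) = 1 ∧
      (swap q r * swap r s) p = p ∧ (swap q r * swap r s) q ≠ q := by
    decide
  obtain ⟨r, s, hs, h1, h2⟩ := key p q h
  intro he
  have hmem : (⟨_, hs⟩ : A₆) ∈ stabilizer A₆ p := h1
  rw [he] at hmem
  exact h2 hmem

theorem ncard_eq_two {D L₀ : Subgroup A₆} (hD : Nat.card D = 12) (hL₀ : Nat.card L₀ = 60)
    (hDL : D ≤ L₀) : {L : Subgroup A₆ | Nat.card L = 60 ∧ D ≤ L}.ncard = 2 := by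
  obtain ⟨φ, rfl⟩ := exists_aut hL₀
  have hcomap : ∀ K : Subgroup A₆, Nat.card (K.comap φ.toMonoidHom) = Nat.card K := fun K =>
    Nat.card_congr ((φ.subgroupMap _).trans (MulEquiv.subgroupCongr
      (Subgroup.map_comap_eq_self_of_surjective φ.surjective K))).toEquiv
  have hD' : Nat.card (D.map φ.toMonoidHom) = 12 :=
    (Nat.card_congr (φ.subgroupMap D).toEquiv).symm.trans hD
  rw [← Subgroup.map_le_iff_le_comap] at hDL
  obtain ⟨p, hp, hDp⟩ := exists_second_fixed_point hD' hDL
  have hinj : Function.Injective (Subgroup.comap φ.toMonoidHom) :=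
    Subgroup.comap_injective φ.surjective
  rw [Set.ncard_eq_two]
  refine ⟨(stabilizer A₆ p).comap φ.toMonoidHom, (stabilizer A₆ 5).comap φ.toMonoidHom,
    fun h => stabilizer_ne hp (hinj h), Set.ext fun L => ⟨fun ⟨hL, hDL'⟩ => ?_, ?_⟩⟩
  · have hLm : (L.map φ.toMonoidHom).comap φ.toMonoidHom = L :=
      Subgroup.comap_map_eq_self_of_injective φ.injective L
    have hL' : Nat.card (L.map φ.toMonoidHom) = 60 := by rw [← hcomap, hLm, hL]
    rw [← hLm]
    exact (eq_stabilizer_or hD' hL' (Subgroup.map_mono hDL') hp hDL hDp).imp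
      (congrArg _) (congrArg _)
  · rintro (rfl | rfl)
    exacts [⟨(hcomap _).trans (card_stabilizer _), Subgroup.map_le_iff_le_comap.1 hDp⟩,
      ⟨(hcomap _).trans (card_stabilizer _), Subgroup.map_le_iff_le_comap.1 hDL⟩]

/-! ### The icosahedral subgroup -/

/-- The conference matrix of order 6: off the diagonal, the signs of the inner products of suitable
direction vectors of the six diagonals of an icosahedron. Point `0` is joined to all others by `+`,
and the `+`-edges among `1, …, 5` form the pentagon `1 2 4 5 3`. -/
def pentagonSign : Fin 6 → Fin 6 → ℤ :=
  ![![0, 1, 1, 1, 1, 1], ![1, 0, 1, 1, -1, -1], ![1, 1, 0, -1, 1, -1],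
    ![1, 1, -1, 0, -1, 1], ![1, -1, 1, -1, 0, 1], ![1, -1, -1, 1, 1, 0]]

/-- The two-graph of the conference matrix; unlike `pentagonSign` it does not depend on the choice of
directions of the diagonals. -/
def tripleSign (i j k : Fin 6) : ℤ := pentagonSign i j * pentagonSign j k * pentagonSign k i

/-- The even permutations preserving the two-graph `tripleSign`: a transitive copy of `A₅` in `A₆`,
the rotation group of the icosahedron acting on its six diagonals. -/
def icosahedral : Subgroup A₆ where
  carrier := {g | ∀ i j k, tripleSign (g.1 i) (g.1 j) (g.1 k) = tripleSign i j k}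
  one_mem' := fun _ _ _ => rfl
  mul_mem' := fun {a b} ha hb i j k => (ha _ _ _).trans (hb i j k)
  inv_mem' := fun {a} ha i j k => by
    have := ha (a.1⁻¹ i) (a.1⁻¹ j) (a.1⁻¹ k)
    simpa using this.symm

theorem icosahedral_ne_top : icosahedral ≠ ⊤ := by
  intro h
  have hs : Perm.sign (swap 0 1 * swap 1 2 : Perm (Fin 6)) = 1 := by decide
  have hmem : (⟨_, hs⟩ : A₆) ∈ icosahedral := h ▸ Subgroup.mem_top _
  have h3 : tripleSign ((swap 0 1 * swap 1 2 : Perm (Fin 6)) 0)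
      ((swap 0 1 * swap 1 2 : Perm (Fin 6)) 1) ((swap 0 1 * swap 1 2 : Perm (Fin 6)) 3) =
      tripleSign 0 1 3 := hmem 0 1 3
  exact absurd h3 (by decide)

/-- The rotation of the pentagon `1 2 4 5 3` preserves `tripleSign`. -/
theorem five_dvd_card_icosahedral : 5 ∣ Nat.card icosahedral := by
  have hs : Perm.sign (swap 1 2 * swap 2 4 * swap 4 5 * swap 5 3 : Perm (Fin 6)) = 1 := by decide
  have hpres : ∀ i j k, tripleSign
      ((swap 1 2 * swap 2 4 * swap 4 5 * swap 5 3 : Perm (Fin 6)) i)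
      ((swap 1 2 * swap 2 4 * swap 4 5 * swap 5 3 : Perm (Fin 6)) j)
      ((swap 1 2 * swap 2 4 * swap 4 5 * swap 5 3 : Perm (Fin 6)) k) = tripleSign i j k := by
    decide +kernel
  have hmem : (⟨_, hs⟩ : A₆) ∈ icosahedral := hpres
  have : Fact (Nat.Prime 5) := ⟨Nat.prime_five⟩
  have ho : orderOf (⟨_, hmem⟩ : icosahedral) = 5 := by
    apply orderOf_eq_prime
    · apply Subtype.ext
      apply Subtype.ext
      change (swap 1 2 * swap 2 4 * swap 4 5 * swap 5 3 : Perm (Fin 6)) ^ 5 = 1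
      decide +kernel
    · intro h
      have h' : (swap 1 2 * swap 2 4 * swap 4 5 * swap 5 3 : Perm (Fin 6)) = 1 :=
        congrArg (fun g : icosahedral => g.1.1) h
      exact absurd h' (by decide)
  rw [← ho]
  exact orderOf_dvd_natCard _

/-- The order of `icosahedral` is a multiple of 60, and a proper subgroup of `A₆` has index at least
6 because `A₆` embeds into the symmetric group on its cosets. -/
theorem card_icosahedral_of_le {D : Subgroup A₆} (hD : Nat.card D = 12) (h : D ≤ icosahedral) :
    Nat.card icosahedral = 60 := by
  have h12 : 12 ∣ Nat.card icosahedral := hD ▸ Subgroup.card_dvd_of_le h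
  obtain ⟨m, hm⟩ : 12 * 5 ∣ Nat.card icosahedral :=
    Nat.Coprime.mul_dvd_of_dvd_of_dvd (by decide) h12 five_dvd_card_icosahedral
  have hmul := icosahedral.card_mul_index
  have hfac := le_index_factorial icosahedral_ne_top
  rw [card_A6, hm] at hmul
  have h6 : m * icosahedral.index = 6 := by
    rw [mul_assoc] at hmul; omega
  have hge : 6 ≤ icosahedral.index := by
    by_contra hlt
    have := Nat.factorial_le (by omega : icosahedral.index ≤ 5)
    have h120 : Nat.factorial 5 = 120 := rfl
    omega
  have hm1 : m = 1 := by
    have hle : icosahedral.index ≤ 6 := Nat.le_of_dvd (by norm_num) ⟨m, by rw [mul_comm, h6]⟩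
    have : icosahedral.index = 6 := le_antisymm hle hge
    rw [this] at h6
    omega
  omega

/-! ### A subgroup of order 60 above the derived subgroup of a copy of `S₄` -/

/-- The involution of the standard pair of generators of `A₄`. -/
abbrev x₄ : Perm (Fin 4) := swap 0 1 * swap 2 3

/-- The 3-cycle of the standard pair of generators of `A₄`; `x₄ * y₄` has order 3 too. -/
abbrev y₄ : Perm (Fin 4) := swap 0 1 * swap 1 2

theorem exists_eq_of_mem_A4 : ∀ g : Perm (Fin 4), Perm.sign g = 1 →
    ∃ i j k : Fin 3, g = y₄ ^ (i : ℕ) * x₄ ^ (j : ℕ) * y₄ ^ (k : ℕ) := by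
  decide +kernel

theorem exists_commutator_of_mem_A4 : ∀ g : Perm (Fin 4), Perm.sign g = 1 →
    ∃ a b : Perm (Fin 4), a * b * a⁻¹ * b⁻¹ = g := by
  decide +kernel

theorem commutator_S4 :
    ⁅(⊤ : Subgroup (Perm (Fin 4))), (⊤ : Subgroup (Perm (Fin 4)))⁆ = alternatingGroup (Fin 4) := by
  apply le_antisymm
  · exact alternatingGroup.commutator_perm_le
  · intro g hg
    obtain ⟨a, b, rfl⟩ := exists_commutator_of_mem_A4 g hg
    exact Subgroup.commutator_mem_commutator (Subgroup.mem_top a) (Subgroup.mem_top b)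

theorem isConj_of_involution {x : Perm (Fin 6)} (h1 : x ≠ 1) (h2 : x ^ 2 = 1)
    (hs : Perm.sign x = 1) : IsConj x (swap 0 1 * swap 2 3) := by
  have ho : orderOf x = 2 := orderOf_eq_prime h2 h1
  obtain ⟨n, hn⟩ := Perm.cycleType_prime_order (σ := x) (by rw [ho]; exact Nat.prime_two)
  rw [ho] at hn
  have hsum := x.sum_cycleType
  have hle : x.support.card ≤ 6 := x.support.card_le_univ
  rw [hn] at hsum
  rw [Perm.sign_of_cycleType, hn] at hs
  simp only [Multiset.sum_replicate, smul_eq_mul, Multiset.card_replicate] at hsum hs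
  have hn1 : n = 1 := by
    have : n ≤ 2 := by omega
    interval_cases n
    · exact absurd hs (by decide)
    · rfl
    · exact absurd hs (by decide)
  rw [Perm.isConj_iff_cycleType_eq, hn, hn1]
  decide +kernel

/-- The finite check. Here `![1, 0, 3, 2, 4, 5]` is `x = (0 1)(2 3)`, and the hypotheses say
`y ^ 3 = 1` and `(x * y) ^ 3 = 1`. Apart from `y = 1` there are sixteen such `y`: the eight 3-cycles
on `{0, 1, 2, 3}`, and eight products of two 3-cycles generating with `x` a single transitive `A₄`,
to which the labelling in `pentagonSign` is adapted. -/
theorem classify_order_three : ∀ y : Perm (Fin 6), (∀ i, y (y (y i)) = i) →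
    (∀ i, ![1, 0, 3, 2, 4, 5] (y (![1, 0, 3, 2, 4, 5] (y (![1, 0, 3, 2, 4, 5] (y i))))) = i) →
    y 5 = 5 ∨ ∀ i j k, tripleSign (y i) (y j) (y k) = tripleSign i j k := by
  decide +kernel

theorem exists_over_of_normalized {f : Perm (Fin 4) →* A₆} (hf : Function.Injective f)
    (hx : (f x₄).1 = swap 0 1 * swap 2 3) :
    ∃ L : Subgroup A₆, Nat.card L = 60 ∧ (alternatingGroup (Fin 4)).map f ≤ L := by
  have hle : ∀ L : Subgroup A₆, f x₄ ∈ L → f y₄ ∈ L → (alternatingGroup (Fin 4)).map f ≤ L := by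
    rintro L hx hy _ ⟨g, hg, rfl⟩
    obtain ⟨i, j, k, rfl⟩ := exists_eq_of_mem_A4 g hg
    rw [map_mul, map_mul, map_pow, map_pow, map_pow]
    exact L.mul_mem (L.mul_mem (L.pow_mem hy _) (L.pow_mem hx _)) (L.pow_mem hy _)
  have hy3 : ∀ i, (f y₄).1 ((f y₄).1 ((f y₄).1 i)) = i := fun i => by
    have h : f y₄ * (f y₄ * f y₄) = 1 := by
      rw [← map_mul, ← map_mul, show y₄ * (y₄ * y₄) = 1 by decide, map_one]
    exact congrArg (fun g : A₆ => g.1 i) h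
  have hval : ∀ i, (f x₄).1 i = ![1, 0, 3, 2, 4, 5] i := by
    rw [hx]; decide
  have hxy3 : ∀ i, (f x₄).1 ((f y₄).1 ((f x₄).1 ((f y₄).1 ((f x₄).1 ((f y₄).1 i))))) = i := by
    intro i
    have h : f x₄ * (f y₄ * (f x₄ * (f y₄ * (f x₄ * f y₄)))) = 1 := by
      simp only [← map_mul]
      rw [show x₄ * (y₄ * (x₄ * (y₄ * (x₄ * y₄)))) = 1 by decide, map_one]
    exact congrArg (fun g : A₆ => g.1 i) h
  simp only [hval] at hxy3
  rcases classify_order_three _ hy3 hxy3 with h | h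
  · refine ⟨stabilizer A₆ 5, card_stabilizer 5, hle _ ?_ h⟩
    exact hval 5
  · have hD : Nat.card ((alternatingGroup (Fin 4)).map f) = 12 := by
      rw [Subgroup.card_map_of_injective hf, nat_card_alternatingGroup, Nat.card_eq_fintype_card,
        Fintype.card_fin]
      rfl
    have hDL : (alternatingGroup (Fin 4)).map f ≤ icosahedral := by
      refine hle _ ?_ h
      intro i j k
      rw [hval, hval, hval]
      revert i j k
      decide
    exact ⟨_, card_icosahedral_of_le hD hDL, hDL⟩

theorem exists_over {f : Perm (Fin 4) →* A₆} (hf : Function.Injective f) :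
    ∃ L : Subgroup A₆, Nat.card L = 60 ∧ (alternatingGroup (Fin 4)).map f ≤ L := by
  have h1 : (f x₄).1 ≠ 1 := fun h => absurd (hf ((Subtype.ext h).trans (map_one f).symm)) (by decide)
  have h2 : (f x₄).1 ^ 2 = 1 := by
    have : f x₄ ^ 2 = 1 := by rw [← map_pow, show x₄ ^ 2 = 1 by decide, map_one]
    exact congrArg Subtype.val this
  obtain ⟨c, hc⟩ := isConj_iff.1 (isConj_of_involution h1 h2 (f x₄).2)
  let ψ : A₆ ≃* A₆ := MulAut.conjNormal c
  obtain ⟨L, hL, hle⟩ := exists_over_of_normalized (f := ψ.toMonoidHom.comp f)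
    (ψ.injective.comp hf) hc
  refine ⟨L.comap ψ.toMonoidHom, ?_, ?_⟩
  · rw [← hL]
    exact Nat.card_congr ((ψ.subgroupMap _).trans (MulEquiv.subgroupCongr
      (Subgroup.map_comap_eq_self_of_surjective ψ.surjective L))).toEquiv
  · rwa [← Subgroup.map_le_iff_le_comap, Subgroup.map_map]

/-- If `S` is a subgroup of `A₆` isomorphic to `S₄`, then there are exactly two
subgroups of `A₆` isomorphic to `A₅` containing the commutator subgroup of `S`. -/
theorem a6_two_a5_above_derived_s4
    (S : Subgroup (alternatingGroup (Fin 6)))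
    (hS : Nonempty (S ≃* Equiv.Perm (Fin 4))) :
    {L : Subgroup (alternatingGroup (Fin 6)) |
      Nonempty (L ≃* alternatingGroup (Fin 5)) ∧ ⁅S, S⁆ ≤ L}.ncard = 2 := by
  obtain ⟨e⟩ := hS
  let f : Perm (Fin 4) →* A₆ := S.subtype.comp e.symm.toMonoidHom
  have hf : Function.Injective f := S.subtype_injective.comp e.symm.injective
  have hS : S = (⊤ : Subgroup (Perm (Fin 4))).map f := by
    ext g
    simp only [Subgroup.mem_map, Subgroup.mem_top, true_and]
    exact ⟨fun hg => ⟨e ⟨g, hg⟩, by simp [f]⟩, by rintro ⟨σ, rfl⟩; exact (e.symm σ).2⟩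
  have hD : ⁅S, S⁆ = (alternatingGroup (Fin 4)).map f := by
    rw [hS, ← Subgroup.map_commutator, commutator_S4]
  have hcard : Nat.card (⁅S, S⁆ : Subgroup A₆) = 12 := by
    rw [hD, Subgroup.card_map_of_injective hf, nat_card_alternatingGroup,
      Nat.card_eq_fintype_card, Fintype.card_fin]
    rfl
  obtain ⟨L, hL, hle⟩ := exists_over hf
  simp only [equiv_A5_iff]
  exact ncard_eq_two hcard hL (hD ▸ hle)
end

section
/- Let z be the element (1,7)(2,8)(3,9)(4,10)(5,11)(6,12) of the alternating group A_12. Then there exists a subgroup H of A_12 isomorphic to the alternating group A_6 such that: every element of H commutes with z; z ∉ H; every element of order 2 in H has cycle type {2,2,2,2} (as a permutation of the 12 points); and for every element h of order 2 in H, the product z·h has cycle type {2,2,2,2,2,2}. -/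
/-!
`H` is the diagonal copy of `A₆`, in which `g` acts simultaneously on the two halves
`{0,…,5}` and `{6,…,11}`, while `z` interchanges the halves by `i ↔ i + 6`. Hence `z`
centralizes `H`, and `z ∉ H` because `H` preserves each half. An involution of `A₆` moves
exactly four points, so its diagonal image moves eight. For `h ∈ H` the product `z * h`
interchanges the halves, hence has no fixed points; when `h` is an involution, `z * h` squares
to `1`, so it is a product of six disjoint transpositions.
-/
open Equiv

/-- The diagonal action of `Perm (Fin 6)` on `Fin 12 = Fin (6 + 6)`, the two halves being the
ranges of `Fin.castAdd 6` and `Fin.natAdd 6`. -/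
def diagPerm : Perm (Fin 6) →* Perm (Fin (6 + 6)) where
  toFun g := finSumFinEquiv.permCongr (sumCongr g g)
  map_one' := by ext i; simp
  map_mul' a b := by
    ext i
    refine Fin.addCases (fun j => ?_) (fun j => ?_) i <;> simp [Equiv.permCongr_apply]

lemma diagPerm_castAdd (g : Perm (Fin 6)) (i : Fin 6) :
    diagPerm g (Fin.castAdd 6 i) = Fin.castAdd 6 (g i) := by
  change finSumFinEquiv (Sum.map g g (finSumFinEquiv.symm (Fin.castAdd 6 i))) = _
  rw [finSumFinEquiv_symm_apply_castAdd, Sum.map_inl, finSumFinEquiv_apply_left]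

lemma diagPerm_natAdd (g : Perm (Fin 6)) (i : Fin 6) :
    diagPerm g (Fin.natAdd 6 i) = Fin.natAdd 6 (g i) := by
  change finSumFinEquiv (Sum.map g g (finSumFinEquiv.symm (Fin.natAdd 6 i))) = _
  rw [finSumFinEquiv_symm_apply_natAdd, Sum.map_inr, finSumFinEquiv_apply_right]

lemma sign_diagPerm (g : Perm (Fin 6)) : Perm.sign (diagPerm g) = 1 := by
  change Perm.sign (finSumFinEquiv.permCongr (sumCongr g g)) = 1
  rw [Perm.sign_permCongr]
  exact (Perm.sign_sumCongr g g).trans (Int.units_mul_self _)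

lemma card_support_diagPerm (g : Perm (Fin 6)) :
    (diagPerm g).support.card = 2 * g.support.card := by
  have h (n : ℕ) (σ : Perm (Fin n)) :
      σ.support.card = ∑ i, if σ i ≠ i then 1 else 0 := by
    rw [← Finset.card_filter]
    rfl
  rw [h, h, Fin.sum_univ_add]
  simp only [diagPerm_castAdd, diagPerm_natAdd, ne_eq, Fin.castAdd_inj, Fin.natAdd_inj]
  ring

/-- The diagonal embedding of `A₆` in `A₁₂`. -/
def diagAlt : alternatingGroup (Fin 6) →* alternatingGroup (Fin 12) where
  toFun g := ⟨diagPerm g, sign_diagPerm g⟩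
  map_one' := Subtype.ext (map_one diagPerm)
  map_mul' a b := Subtype.ext (map_mul diagPerm a.1 b.1)

lemma diagAlt_injective : Function.Injective diagAlt := by
  intro a b h
  have h' : diagPerm a.1 = diagPerm b.1 := congrArg Subtype.val h
  refine Subtype.ext (Equiv.ext fun i => ?_)
  have := congrArg (fun σ => σ (Fin.castAdd 6 i)) h'
  simpa only [diagPerm_castAdd, Fin.castAdd_inj] using this

lemma cycleType_of_orderOf_two {n : ℕ} (σ : Perm (Fin n)) (h : orderOf σ = 2) (k : ℕ)
    (hk : σ.support.card = 2 * k) : σ.cycleType = Multiset.replicate k 2 := by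
  obtain ⟨m, hm⟩ := Perm.cycleType_prime_order (h ▸ Nat.prime_two)
  rw [h] at hm
  have hs := Perm.sum_cycleType σ
  rw [hm, Multiset.sum_replicate, smul_eq_mul] at hs
  rw [hm]
  congr 1
  omega

/-- An involution of `A₆` is a product of an even number of disjoint transpositions, with at most
three of them fitting in six points; so there are two. -/
lemma card_support_of_even_involution (g : Perm (Fin 6)) (hg : Perm.sign g = 1)
    (h : orderOf g = 2) : g.support.card = 4 := by
  obtain ⟨m, hm⟩ := Perm.cycleType_prime_order (h ▸ Nat.prime_two)
  rw [h] at hm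
  have hs := Perm.sum_cycleType g
  rw [hm, Multiset.sum_replicate, smul_eq_mul] at hs
  have hle : g.support.card ≤ 6 := by simpa using Finset.card_le_univ g.support
  have hm3 : m ≤ 2 := by omega
  rw [Perm.sign_of_cycleType, hm] at hg
  interval_cases m
  · exact absurd hg (by decide)
  · omega
  · exact absurd hg (by decide)

/-- The involution `z` as a permutation. -/
def swapHalves : Perm (Fin 12) :=
  swap 0 6 * swap 1 7 * swap 2 8 * swap 3 9 * swap 4 10 * swap 5 11

lemma swapHalves_castAdd (i : Fin 6) : swapHalves (Fin.castAdd 6 i) = Fin.natAdd 6 i := by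
  revert i; decide

lemma swapHalves_natAdd (i : Fin 6) : swapHalves (Fin.natAdd 6 i) = Fin.castAdd 6 i := by
  revert i; decide

lemma castAdd_ne_natAdd (i j : Fin 6) : (Fin.castAdd 6 i : Fin (6 + 6)) ≠ Fin.natAdd 6 j := by
  intro h
  have := congrArg Fin.val h
  simp only [Fin.val_castAdd, Fin.val_natAdd] at this
  omega

lemma swapHalves_commute (g : Perm (Fin 6)) :
    swapHalves * diagPerm g = diagPerm g * swapHalves := by
  refine Equiv.ext fun i : Fin (6 + 6) => ?_
  refine Fin.addCases (fun j => ?_) (fun j => ?_) i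
  · rw [Perm.mul_apply, Perm.mul_apply, diagPerm_castAdd, swapHalves_castAdd,
      swapHalves_castAdd, diagPerm_natAdd]
  · rw [Perm.mul_apply, Perm.mul_apply, diagPerm_natAdd, swapHalves_natAdd,
      swapHalves_natAdd, diagPerm_castAdd]

lemma swapHalves_mul_apply_ne (g : Perm (Fin 6)) (i : Fin (6 + 6)) :
    (swapHalves * diagPerm g : Perm (Fin 12)) i ≠ i := by
  refine Fin.addCases (fun j => ?_) (fun j => ?_) i
  · rw [Perm.mul_apply, diagPerm_castAdd, swapHalves_castAdd]
    exact (castAdd_ne_natAdd _ _).symm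
  · rw [Perm.mul_apply, diagPerm_natAdd, swapHalves_natAdd]
    exact castAdd_ne_natAdd _ _

lemma swapHalves_sq : swapHalves ^ 2 = 1 := by
  refine Equiv.ext fun i : Fin (6 + 6) => ?_
  rw [sq, Perm.mul_apply, Perm.one_apply]
  refine Fin.addCases (fun j => ?_) (fun j => ?_) i
  · rw [swapHalves_castAdd, swapHalves_natAdd]
  · rw [swapHalves_natAdd, swapHalves_castAdd]

/-- Let `z` be the element `(1,7)(2,8)(3,9)(4,10)(5,11)(6,12)` of `A₁₂` (written
with `0`-based indices). Then there is a subgroup `H` of `A₁₂` isomorphic to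
`A₆` such that every element of `H` commutes with `z`, `z ∉ H`, every involution
of `H` has cycle type `{2,2,2,2}`, and the product of `z` with any involution of
`H` has cycle type `{2,2,2,2,2,2}`. -/
theorem a12_centralizer_a6_subgroup
    (z : alternatingGroup (Fin 12))
    (hz : (z : Equiv.Perm (Fin 12)) =
      swap 0 6 * swap 1 7 * swap 2 8 * swap 3 9 * swap 4 10 * swap 5 11) :
    ∃ H : Subgroup (alternatingGroup (Fin 12)),
      Nonempty (H ≃* alternatingGroup (Fin 6)) ∧
      (∀ h ∈ H, z * h = h * z) ∧
      z ∉ H ∧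
      (∀ h ∈ H, orderOf h = 2 →
        ((h : alternatingGroup (Fin 12)) : Equiv.Perm (Fin 12)).cycleType = {2, 2, 2, 2}) ∧
      (∀ h ∈ H, orderOf h = 2 →
        ((z * h : alternatingGroup (Fin 12)) : Equiv.Perm (Fin 12)).cycleType =
          {2, 2, 2, 2, 2, 2}) := by
  refine ⟨diagAlt.range, ⟨(MonoidHom.ofInjective diagAlt_injective).symm⟩, ?_, ?_, ?_, ?_⟩
  · rintro _ ⟨g, rfl⟩
    apply Subtype.ext
    change (z : Perm (Fin 12)) * diagPerm g = diagPerm g * (z : Perm (Fin 12))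
    rw [hz]
    exact swapHalves_commute g
  · rintro ⟨g, hg⟩
    have h : diagPerm g = swapHalves := (congrArg Subtype.val hg).trans hz
    -- `diagPerm g` fixes the first half setwise, `swapHalves` moves it off itself
    have h0 := diagPerm_castAdd g 0
    rw [h, swapHalves_castAdd] at h0
    exact castAdd_ne_natAdd _ _ h0.symm
  · rintro _ ⟨g, rfl⟩ ho
    have hg : orderOf (g : Perm (Fin 6)) = 2 := by
      rw [Subgroup.orderOf_coe, ← orderOf_injective diagAlt diagAlt_injective, ho]
    refine cycleType_of_orderOf_two (n := 12) _ ((Subgroup.orderOf_coe _).trans ho) 4 ?_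
    refine (card_support_diagPerm g).trans ?_
    rw [card_support_of_even_involution g g.2 hg]
  · rintro _ ⟨g, rfl⟩ ho
    have hne := swapHalves_mul_apply_ne g
    have hzg : ((z * diagAlt g : alternatingGroup (Fin 12)) : Perm (Fin 12)) =
        swapHalves * diagPerm g := by
      rw [Subgroup.coe_mul, hz]
      rfl
    rw [hzg]
    have hd : (diagPerm g : Perm (Fin 12)) ^ 2 = 1 := by
      have h2 : diagAlt g ^ 2 = 1 := ho ▸ pow_orderOf_eq_one (diagAlt g)
      exact congrArg Subtype.val h2
    refine cycleType_of_orderOf_two (n := 12) _ ?_ 6 ?_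
    · refine orderOf_eq_prime ?_ fun h1 => hne 0 ?_
      · have hc : Commute swapHalves (diagPerm g : Perm (Fin 12)) := swapHalves_commute g
        rw [hc.mul_pow, swapHalves_sq, hd, one_mul]
      · rw [h1]; rfl
    · have hu : (swapHalves * diagPerm g : Perm (Fin 12)).support = Finset.univ :=
        Finset.eq_univ_iff_forall.2 fun i => Perm.mem_support.2 (hne i)
      rw [hu]
      rfl
end

section
/- Let V be a real vector space endowed with a commutative bilinear product · and a positive definite symmetric bilinear form B that associates with the product, i.e. B(u·v, w) = B(u, v·w) for all u, v, w in V. Let a be an idempotent (a·a = a) such that V is spanned by the eigenspaces of the linear operator ad_a : x ↦ a·x for the eigenvalues 1, 0, 1/4 and 1/32. If e is an idempotent (e·e = e) with B(a, e) = 0, then a·e = 0. -/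
/-! Decompose `e = x + y + z + w` into `ad_a`-eigenvectors for `1, 0, 1/4, 1/32`. Since `B` associates
with the product, `ad_a` is self-adjoint, so the components are pairwise orthogonal and
`0 = B a e = B a (e·e) = B (a·e) e = B x x + B z z / 4 + B w w / 32`.
Positive definiteness forces `x = z = w = 0`, so `e = y` lies in the `0`-eigenspace. -/

/-- Let `V` be a real vector space with a commutative bilinear product `mul` and
a positive definite symmetric bilinear form `B` associating with the product.
Let `a` be an idempotent such that `V` is spanned by the eigenspaces of
`ad_a : x ↦ mul a x` for the eigenvalues `1, 0, 1/4, 1/32`.  If `e` is an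
idempotent orthogonal to `a`, then `mul a e = 0`. -/
theorem orthogonal_idempotent_to_axis_multiplies_to_zero
    {V : Type*} [AddCommGroup V] [Module ℝ V]
    (mul : V →ₗ[ℝ] V →ₗ[ℝ] V)
    (hcomm : ∀ u v : V, mul u v = mul v u)
    (B : LinearMap.BilinForm ℝ V)
    (hsymm : ∀ u v : V, B u v = B v u)
    (hpos : ∀ v : V, v ≠ 0 → 0 < B v v)
    (hassoc : ∀ u v w : V, B (mul u v) w = B u (mul v w))
    (a : V) (ha : mul a a = a)
    (hspan :
      Module.End.eigenspace (mul a) 1 ⊔ Module.End.eigenspace (mul a) 0 ⊔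
        Module.End.eigenspace (mul a) (1/4) ⊔ Module.End.eigenspace (mul a) (1/32) = ⊤)
    (e : V) (he : mul e e = e) (horth : B a e = 0) :
    mul a e = 0 := by
  have orth : ∀ (l m : ℝ) (u v : V), mul a u = l • u → mul a v = m • v → l ≠ m → B u v = 0 := by
    intro l m u v hu hv hlm
    have h := hassoc u a v
    rw [hcomm u a, hu, hv] at h
    simp only [map_smul, LinearMap.smul_apply, smul_eq_mul] at h
    have h' : (l - m) * B u v = 0 := by linarith
    exact (mul_eq_zero.mp h').resolve_left (sub_ne_zero.mpr hlm)
  have nonneg : ∀ v : V, 0 ≤ B v v := by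
    intro v
    by_cases hv : v = 0
    · simp [hv]
    · exact (hpos v hv).le
  have eq_zero : ∀ v : V, B v v = 0 → v = 0 := by
    intro v h
    by_contra hv
    exact (hpos v hv).ne' h
  have hmem : e ∈ (⊤ : Submodule ℝ V) := Submodule.mem_top
  rw [← hspan] at hmem
  obtain ⟨s, hs, w, hw, rfl⟩ := Submodule.mem_sup.mp hmem
  obtain ⟨t, ht, z, hz, rfl⟩ := Submodule.mem_sup.mp hs
  obtain ⟨x, hx, y, hy, rfl⟩ := Submodule.mem_sup.mp ht
  rw [Module.End.mem_eigenspace_iff] at hx hy hz hw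
  have hae : mul a (x + y + z + w) = x + (1/4 : ℝ) • z + (1/32 : ℝ) • w := by
    simp only [map_add, hx, hy, hz, hw, one_smul, zero_smul, add_zero]
  have h := hassoc a (x + y + z + w) (x + y + z + w)
  rw [he, horth, hae] at h
  have hxy := orth _ _ _ _ hx hy (by norm_num)
  have hxz := orth _ _ _ _ hx hz (by norm_num)
  have hxw := orth _ _ _ _ hx hw (by norm_num)
  have hzy := orth _ _ _ _ hz hy (by norm_num)
  have hzw := orth _ _ _ _ hz hw (by norm_num)
  have hwy := orth _ _ _ _ hw hy (by norm_num)
  have hzx := (hsymm z x).trans hxz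
  have hwx := (hsymm w x).trans hxw
  have hwz := (hsymm w z).trans hzw
  simp only [map_add, map_smul, LinearMap.add_apply, LinearMap.smul_apply, smul_eq_mul,
    hxy, hxz, hxw, hzy, hzw, hwy, hzx, hwx, hwz] at h
  have nx := nonneg x
  have nz := nonneg z
  have nw := nonneg w
  rw [hae, eq_zero x (by linarith), eq_zero z (by linarith), eq_zero w (by linarith)]
  simp
end

section
/- There exists a group automorphism φ of the alternating group A_6 such that for every element g of A_6 of cycle type {3} (a 3-cycle), the image φ(g) has cycle type {3,3} (a product of two disjoint 3-cycles). -/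
/-!
The proof realises the outer automorphism of `S₆` through the classical duality between points
and synthematic totals. A *syntheme* is a partition of the six points into three pairs, and a
*total* is a set of five synthemes that together contain each of the fifteen pairs once. There are
six totals, and any two distinct totals `t`, `u` share exactly one syntheme; `partner t u` is the
fixed-point-free involution whose orbits are the pairs of that syntheme. The totals are numbered so
that the incidence is self-dual: `{a, b}` lies in the syntheme of `{t, u}` iff `{t, u}` lies in the
syntheme of `{a, b}` (`partner_symm`).

Call `σ` (on points) and `τ` (on totals) dual if together they preserve `partner`. Duality is
multiplicative, and symmetric by the numbering. Every `σ` has a dual (`exists_dual`), since the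
transposition `(i j)` is dual to the triple transposition `partner i j`; the dual is unique
(`Dual.unique`), since distinct pairs of totals share distinct synthemes. So `σ ↦ τ` is an
involutive automorphism `outer` of `S₆`. It preserves the sign, the only surjective homomorphism
`S₆ → {±1}`, so it restricts to `A₆`. It takes one 3-cycle to a product of two disjoint 3-cycles,
and therefore all of them, as 3-cycles are conjugate in `S₆`.
-/

namespace A6Outer

open Equiv Equiv.Perm

/-- For `t ≠ u`, `partner t u a` is the point paired with `a` in the syntheme common to the totals
`t` and `u`; for `t = u` it is `a` by convention. -/
def partner : Fin 6 → Fin 6 → Fin 6 → Fin 6 :=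
  ![![![0, 1, 2, 3, 4, 5], ![1, 0, 3, 2, 5, 4], ![3, 5, 4, 0, 2, 1],
      ![2, 4, 0, 5, 1, 3], ![5, 2, 1, 4, 3, 0], ![4, 3, 5, 1, 0, 2]],
    ![![1, 0, 3, 2, 5, 4], ![0, 1, 2, 3, 4, 5], ![4, 2, 1, 5, 0, 3],
      ![5, 3, 4, 1, 2, 0], ![3, 4, 5, 0, 1, 2], ![2, 5, 0, 4, 3, 1]],
    ![![3, 5, 4, 0, 2, 1], ![4, 2, 1, 5, 0, 3], ![0, 1, 2, 3, 4, 5],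
      ![1, 0, 5, 4, 3, 2], ![2, 3, 0, 1, 5, 4], ![5, 4, 3, 2, 1, 0]],
    ![![2, 4, 0, 5, 1, 3], ![5, 3, 4, 1, 2, 0], ![1, 0, 5, 4, 3, 2],
      ![0, 1, 2, 3, 4, 5], ![4, 5, 3, 2, 0, 1], ![3, 2, 1, 0, 5, 4]],
    ![![5, 2, 1, 4, 3, 0], ![3, 4, 5, 0, 1, 2], ![2, 3, 0, 1, 5, 4],
      ![4, 5, 3, 2, 0, 1], ![0, 1, 2, 3, 4, 5], ![1, 0, 4, 5, 2, 3]],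
    ![![4, 3, 5, 1, 0, 2], ![2, 5, 0, 4, 3, 1], ![5, 4, 3, 2, 1, 0],
      ![3, 2, 1, 0, 5, 4], ![1, 0, 4, 5, 2, 3], ![0, 1, 2, 3, 4, 5]]]

theorem partner_symm : ∀ t u a b, partner t u a = b ↔ partner a b t = u := by
  decide +kernel

theorem partner_involutive : ∀ t u, Function.Involutive (partner t u) := by
  unfold Function.Involutive
  decide +kernel

/-- Distinct totals `x`, `s` are told apart by synthemes: some syntheme of `s` is not in `x`.
Any third total `w` gives one. -/
theorem exists_separating : ∀ s x, s ≠ x → ∃ w, ∀ v, ∃ a, partner x v a ≠ partner s w a := by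
  decide +kernel

/-- `σ`, acting on points, and `τ`, acting on totals, are dual if together they preserve the
incidence of points, synthemes and totals. -/
def Dual (σ τ : Perm (Fin 6)) : Prop :=
  ∀ t u a, partner (τ t) (τ u) (σ a) = σ (partner t u a)

instance (σ τ : Perm (Fin 6)) : Decidable (Dual σ τ) := by
  unfold Dual
  infer_instance

theorem Dual.symm {σ τ : Perm (Fin 6)} (h : Dual σ τ) : Dual τ σ := by
  intro a b t
  have h' := h t (partner a b t) a
  rw [(partner_symm t (partner a b t) a b).2 rfl] at h'
  exact (partner_symm _ _ _ _).1 h'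

theorem Dual.one : Dual 1 1 := fun _ _ _ => rfl

theorem Dual.mul {σ τ σ' τ' : Perm (Fin 6)} (h : Dual σ τ) (h' : Dual σ' τ') :
    Dual (σ * σ') (τ * τ') := by
  intro t u a
  simp only [Perm.mul_apply]
  rw [h, h']

theorem Dual.unique {σ τ τ' : Perm (Fin 6)} (h : Dual σ τ) (h' : Dual σ τ') : τ = τ' := by
  ext1 t
  by_contra hne
  obtain ⟨w, hw⟩ := exists_separating (τ' t) (τ t) (Ne.symm hne)
  obtain ⟨a, ha⟩ := hw (τ (τ'.symm w))
  apply ha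
  have e := h t (τ'.symm w) (σ.symm a)
  have e' := h' t (τ'.symm w) (σ.symm a)
  simp only [Equiv.apply_symm_apply] at e e'
  rw [e, e']

theorem dual_swap : ∀ i : Fin 5, Dual (swap i.castSucc i.succ)
    (partner_involutive i.castSucc i.succ).toPerm := by
  decide +kernel

theorem exists_dual (σ : Perm (Fin 6)) : ∃ τ, Dual σ τ := by
  have hσ : σ ∈ Submonoid.closure (Set.range fun i : Fin 5 => swap i.castSucc i.succ) := by
    rw [mclosure_swap_castSucc_succ]
    trivial
  induction hσ using Submonoid.closure_induction with
  | mem x hx =>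
    obtain ⟨i, rfl⟩ := hx
    exact ⟨_, dual_swap i⟩
  | one => exact ⟨1, Dual.one⟩
  | mul x y _ _ hx hy =>
    obtain ⟨τ, hτ⟩ := hx
    obtain ⟨τ', hτ'⟩ := hy
    exact ⟨τ * τ', hτ.mul hτ'⟩

/-- The automorphism of `S₆` taking each permutation to its dual. -/
noncomputable def outer : Perm (Fin 6) ≃* Perm (Fin 6) where
  toFun σ := (exists_dual σ).choose
  invFun σ := (exists_dual σ).choose
  left_inv σ := (exists_dual _).choose_spec.unique (exists_dual σ).choose_spec.symm
  right_inv σ := (exists_dual _).choose_spec.unique (exists_dual σ).choose_spec.symm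
  map_mul' σ σ' := (exists_dual _).choose_spec.unique
    ((exists_dual σ).choose_spec.mul (exists_dual σ').choose_spec)

theorem Dual.outer_eq {σ τ : Perm (Fin 6)} (h : Dual σ τ) : outer σ = τ :=
  (exists_dual σ).choose_spec.unique h

theorem sign_outer (σ : Perm (Fin 6)) : sign (outer σ) = sign σ := by
  have h : Function.Surjective (sign.comp outer.toMonoidHom : Perm (Fin 6) →* ℤˣ) :=
    (sign_surjective (Fin 6)).comp outer.surjective
  exact DFunLike.congr_fun (eq_sign_of_surjective_hom h) σ

theorem map_outer_alternatingGroup :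
    (alternatingGroup (Fin 6)).map outer.toMonoidHom = alternatingGroup (Fin 6) := by
  ext σ
  rw [Subgroup.mem_map_equiv, mem_alternatingGroup, mem_alternatingGroup,
    ← sign_outer, MulEquiv.apply_symm_apply]

theorem dual_threeCycle : Dual (swap 0 2 * swap 0 1)
    ((swap 0 2 * swap 0 5) * (swap 1 4 * swap 1 3)) := by
  decide +kernel

theorem cycleType_outer {σ : Perm (Fin 6)} (hσ : σ.cycleType = {3}) :
    (outer σ).cycleType = {3, 3} := by
  have h0 : (swap 0 2 * swap 0 1 : Perm (Fin 6)).cycleType = {3} :=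
    isThreeCycle_swap_mul_swap_same (by decide) (by decide) (by decide)
  have hc := outer.toMonoidHom.map_isConj (isConj_iff_cycleType_eq.2 (hσ.trans h0.symm))
  have hc' := isConj_iff_cycleType_eq.1 hc
  refine hc'.trans ?_
  change (outer (swap 0 2 * swap 0 1)).cycleType = _
  have h1 : (swap 0 2 * swap 0 5 : Perm (Fin 6)).cycleType = {3} :=
    isThreeCycle_swap_mul_swap_same (by decide) (by decide) (by decide)
  have h2 : (swap 1 4 * swap 1 3 : Perm (Fin 6)).cycleType = {3} :=
    isThreeCycle_swap_mul_swap_same (by decide) (by decide) (by decide)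
  have hd : Perm.Disjoint (swap 0 2 * swap 0 5 : Perm (Fin 6)) (swap 1 4 * swap 1 3) := by
    unfold Perm.Disjoint
    decide
  rw [dual_threeCycle.outer_eq, hd.cycleType_mul, h1, h2]
  rfl

end A6Outer

/-- There is an automorphism of `A₆` sending every 3-cycle to a product of two
disjoint 3-cycles (an exceptional automorphism of `A₆`). -/
theorem a6_exceptional_automorphism :
    ∃ φ : alternatingGroup (Fin 6) ≃* alternatingGroup (Fin 6),
      ∀ g : alternatingGroup (Fin 6),
        (g : Equiv.Perm (Fin 6)).cycleType = {3} →
        ((φ g : alternatingGroup (Fin 6)) : Equiv.Perm (Fin 6)).cycleType = {3, 3} := by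
  exact ⟨(A6Outer.outer.subgroupMap _).trans
    (MulEquiv.subgroupCongr A6Outer.map_outer_alternatingGroup),
    fun _ hg => A6Outer.cycleType_outer hg⟩
end

section
/- Every subgroup of the alternating group A_6 that is isomorphic to the alternating group A_5 is a maximal subgroup of A_6, and every subgroup of A_6 that is isomorphic to the symmetric group S_4 is a maximal subgroup of A_6. -/
/-!
The group `A₆` is simple of order 360. A proper subgroup `K` of index `n` has trivial normal core,
so `A₆` embeds into the permutations of its `n` cosets and `360 ∣ n!`; hence `n ≥ 6`
(`six_le_index`). A subgroup isomorphic to `A₅` has index 6, one isomorphic to `S₄` has index 15,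
and every proper divisor of 6 or of 15 is at most 5. So any strictly larger subgroup, whose index
is such a proper divisor, is all of `A₆`.
-/

lemma card_alternatingGroup_six : Nat.card (alternatingGroup (Fin 6)) = 360 := by
  rw [nat_card_alternatingGroup]; simp [Nat.factorial]

lemma six_le_index {K : Subgroup (alternatingGroup (Fin 6))} (hK : K ≠ ⊤) : 6 ≤ K.index := by
  have : IsSimpleGroup (alternatingGroup (Fin 6)) := alternatingGroup.isSimpleGroup (by simp)
  have hcore : K.normalCore = ⊥ :=
    (Subgroup.Normal.eq_bot_or_eq_top K.normalCore_normal).resolve_right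
      fun h => hK (top_le_iff.mp (h ▸ K.normalCore_le))
  -- The kernel of the action on the cosets of `K` is the normal core.
  have hinj : Function.Injective
      (MulAction.toPermHom (alternatingGroup (Fin 6)) (alternatingGroup (Fin 6) ⧸ K)) := by
    rw [← MonoidHom.ker_eq_bot_iff, ← Subgroup.normalCore_eq_ker, hcore]
  have hdvd := Subgroup.card_dvd_of_injective _ hinj
  rw [card_alternatingGroup_six, Nat.card_perm, ← Subgroup.index_eq_card] at hdvd
  by_contra! hlt
  have hle := (Nat.le_of_dvd (Nat.factorial_pos _) hdvd).trans
    (Nat.factorial_le (Nat.le_of_lt_succ hlt))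
  simp [Nat.factorial] at hle

/-- A proper subgroup of `A₆` is maximal as soon as every proper divisor of its
index is smaller than 6, the least possible index of a proper subgroup. -/
lemma isCoatom_of_index_divisors {n : ℕ} {H : Subgroup (alternatingGroup (Fin 6))}
    (hH : H.index = n) (hn : 1 < n) (hdiv : ∀ d, d ∣ n → d ≠ n → d < 6) : IsCoatom H := by
  refine ⟨fun h => ?_, fun K hHK => ?_⟩
  · rw [h, Subgroup.index_top] at hH
    omega
  · by_contra hK
    have hlt := Subgroup.index_strictAnti hHK
    have hsmall := hdiv K.index (hH ▸ Subgroup.index_dvd_of_le hHK.le) (by omega)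
    exact absurd (six_le_index hK) (by omega)

/-- Every subgroup of `A₆` isomorphic to `A₅` is a maximal subgroup of `A₆`,
and every subgroup of `A₆` isomorphic to `S₄` is a maximal subgroup of `A₆`. -/
theorem a6_a5_and_s4_subgroups_are_maximal :
    (∀ H : Subgroup (alternatingGroup (Fin 6)),
      Nonempty (H ≃* alternatingGroup (Fin 5)) → IsCoatom H) ∧
    (∀ H : Subgroup (alternatingGroup (Fin 6)),
      Nonempty (H ≃* Equiv.Perm (Fin 4)) → IsCoatom H) := by
  constructor
  · rintro H ⟨e⟩
    have hcard : Nat.card H = 60 := by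
      rw [Nat.card_congr e.toEquiv, nat_card_alternatingGroup]; simp [Nat.factorial]
    have hmul := H.card_mul_index
    rw [hcard, card_alternatingGroup_six] at hmul
    refine isCoatom_of_index_divisors (n := 6) (by omega) (by norm_num) fun d hd hne => ?_
    exact lt_of_le_of_ne (Nat.le_of_dvd (by norm_num) hd) hne
  · rintro H ⟨e⟩
    have hcard : Nat.card H = 24 := by
      rw [Nat.card_congr e.toEquiv, Nat.card_perm]; simp [Nat.factorial]
    have hmul := H.card_mul_index
    rw [hcard, card_alternatingGroup_six] at hmul
    refine isCoatom_of_index_divisors (n := 15) (by omega) (by norm_num) fun d hd hne => ?_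
    have hle := Nat.le_of_dvd (by norm_num) hd
    interval_cases d <;> omega
end
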